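/- arXiv:q-alg/9603016 — 2 statements merged into one kernel-verified Lean document; each statement's English description precedes it below -/
import Mathlib

section
/- Crossed products M ×_{ρ,σ} C and M ×_{ρ',σ'} C corresponding to the same entwining data (P, C, ψ, e, ψ^C) are equivalent (there exists an algebra and left M-module isomorphism Θ : M ×_{ρ',σ'} C → M ×_{ρ,σ} C such that ψ^C₂₃∘ψ₁₂∘(id_C ⊗ Θ̃) = (Θ̃ ⊗ id_C)∘ψ^C where Θ̃(c) = Θ(1 ⊗ c)) if and only if the crossed product data (ρ, σ) and (ρ', σ') are gauge equivalent, i.e. there exists a convolution invertible γ : C → M with γ(e) = 1 satisfying the covariance condition (2.16) such that (ρ', σ') are equivalent to (ρ^γ, σ^γ). -/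
open TensorProduct LinearMap

noncomputable section

namespace Entwine

variable (k : Type) [Field k] (P : Type) [Ring P] [Algebra k P]
  (C : Type) [AddCommGroup C] [Module k C] [Coalgebra k C]

/-- coproduct of `C` -/
abbrev Δ : C →ₗ[k] C ⊗[k] C := Coalgebra.comul
/-- counit of `C` -/
abbrev ε : C →ₗ[k] k := Coalgebra.counit
/-- multiplication of `P` -/
abbrev μ : P ⊗[k] P →ₗ[k] P := LinearMap.mul' k P

variable (ψ : C ⊗[k] P →ₗ[k] P ⊗[k] C)

/-- entwining axiom `ψ∘(id⊗μ) = (μ⊗id)∘ψ₂₃∘ψ₁₂` -/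
def AxMul : Prop :=
  ψ ∘ₗ map LinearMap.id (μ k P) =
    map (μ k P) LinearMap.id
      ∘ₗ (TensorProduct.assoc k P P C).symm.toLinearMap
      ∘ₗ map LinearMap.id ψ
      ∘ₗ (TensorProduct.assoc k P C P).toLinearMap
      ∘ₗ map ψ LinearMap.id
      ∘ₗ (TensorProduct.assoc k C P P).symm.toLinearMap

/-- entwining axiom `ψ(c ⊗ 1) = 1 ⊗ c` -/
def AxOne : Prop := ∀ c : C, ψ (c ⊗ₜ (1 : P)) = (1 : P) ⊗ₜ c

/-- entwining axiom `(id⊗Δ)∘ψ = ψ₁₂∘ψ₂₃∘(Δ⊗id)` -/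
def AxComul : Prop :=
  map LinearMap.id (Δ k C) ∘ₗ ψ =
    (TensorProduct.assoc k P C C).toLinearMap
      ∘ₗ map ψ LinearMap.id
      ∘ₗ (TensorProduct.assoc k C P C).symm.toLinearMap
      ∘ₗ map LinearMap.id ψ
      ∘ₗ (TensorProduct.assoc k C C P).toLinearMap
      ∘ₗ map (Δ k C) LinearMap.id

/-- entwining axiom `(id⊗ε)∘ψ = ε⊗id` -/
def AxCounit : Prop :=
  (TensorProduct.rid k P).toLinearMap ∘ₗ map LinearMap.id (ε k C) ∘ₗ ψ =
    (TensorProduct.lid k P).toLinearMap ∘ₗ map (ε k C) LinearMap.id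

/-- `ψ` is an entwining map for the algebra `P` and the coalgebra `C` -/
def IsEntwining : Prop :=
  AxMul k P C ψ ∧ AxOne k P C ψ ∧ AxComul k P C ψ ∧ AxCounit k P C ψ

variable (e : C)

/-- `e` is a group-like element -/
def IsGrouplike : Prop :=
  Δ k C e = e ⊗ₜ[k] e ∧ ε k C e = 1

variable (ψC : C ⊗[k] C →ₗ[k] C ⊗[k] C)

/-- `(id⊗Δ)∘ψ^C = ψ^C₁₂∘ψ^C₂₃∘(Δ⊗id)` -/
def AxPsiCComul : Prop :=
  map LinearMap.id (Δ k C) ∘ₗ ψC =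
    (TensorProduct.assoc k C C C).toLinearMap
      ∘ₗ map ψC LinearMap.id
      ∘ₗ (TensorProduct.assoc k C C C).symm.toLinearMap
      ∘ₗ map LinearMap.id ψC
      ∘ₗ (TensorProduct.assoc k C C C).toLinearMap
      ∘ₗ map (Δ k C) LinearMap.id

/-- `(id⊗ε)∘ψ^C = ε⊗id` -/
def AxPsiCCounit : Prop :=
  (TensorProduct.rid k C).toLinearMap ∘ₗ map LinearMap.id (ε k C) ∘ₗ ψC =
    (TensorProduct.lid k C).toLinearMap ∘ₗ map (ε k C) LinearMap.id

/-- `ψ^C(e ⊗ c) = Δc` -/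
def AxPsiCUnit : Prop := ∀ c : C, ψC (e ⊗ₜ[k] c) = Δ k C c

/-- `(P, C, ψ, e, ψ^C)` form entwining data -/
def IsEntwiningData : Prop :=
  IsEntwining k P C ψ ∧ IsGrouplike k C e ∧
    AxPsiCComul k C ψC ∧ AxPsiCCounit k C ψC ∧ AxPsiCUnit k C e ψC

/-- the right coaction `Δ_R u = ψ(e ⊗ u)` on `P` -/
def deltaR : P →ₗ[k] P ⊗[k] C := ψ ∘ₗ TensorProduct.mk k C P e

/-- the fixed point subspace `M = P^{coC}_e`, as a submodule of `P` -/
def Msub : Submodule k P where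
  carrier := {x : P | ψ (e ⊗ₜ x) = x ⊗ₜ e}
  add_mem' := by
    intro a b ha hb
    simp only [Set.mem_setOf_eq] at *
    rw [TensorProduct.tmul_add, map_add, ha, hb, TensorProduct.add_tmul]
  zero_mem' := by
    simp only [Set.mem_setOf_eq, TensorProduct.tmul_zero, map_zero,
      TensorProduct.zero_tmul]
  smul_mem' := by
    intro r x hx
    simp only [Set.mem_setOf_eq] at *
    rw [TensorProduct.tmul_smul, map_smul, hx, TensorProduct.smul_tmul']

/-- the subspace `M ⊗ C` of `P ⊗ C` -/
def MCsub : Submodule k (P ⊗[k] C) :=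
  LinearMap.range (map (Msub k P C ψ e).subtype (LinearMap.id : C →ₗ[k] C))

variable (ρ : C ⊗[k] P →ₗ[k] P) (σ : C ⊗[k] C →ₗ[k] P)

/-- the map `ρ̂ : c ⊗ x ↦ ρ(c₍₁₎ ⊗ x_α) ⊗ c₍₂₎^α` -/
def rhat : C ⊗[k] P →ₗ[k] P ⊗[k] C :=
  map ρ LinearMap.id
    ∘ₗ (TensorProduct.assoc k C P C).symm.toLinearMap
    ∘ₗ map LinearMap.id ψ
    ∘ₗ (TensorProduct.assoc k C C P).toLinearMap
    ∘ₗ map (Δ k C) LinearMap.id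

/-- the map `σ̂ : b ⊗ c ↦ σ(b₍₁₎ ⊗ c_A) ⊗ b₍₂₎^A` -/
def shat : C ⊗[k] C →ₗ[k] P ⊗[k] C :=
  map σ LinearMap.id
    ∘ₗ (TensorProduct.assoc k C C C).symm.toLinearMap
    ∘ₗ map LinearMap.id ψC
    ∘ₗ (TensorProduct.assoc k C C C).toLinearMap
    ∘ₗ map (Δ k C) LinearMap.id

/-- multiplication of the first two factors: `x ⊗ (y ⊗ c) ↦ xy ⊗ c` -/
def mulPC : P ⊗[k] (P ⊗[k] C) →ₗ[k] P ⊗[k] C :=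
  map (μ k P) LinearMap.id ∘ₗ (TensorProduct.assoc k P P C).symm.toLinearMap

/-- the crossed product `(x ⊗ b)(y ⊗ c) = xρ(b₍₁₎⊗y_α)σ(b₍₂₎^α₍₁₎⊗c_A) ⊗ b₍₂₎^α₍₂₎^A` -/
def prodX : (P ⊗[k] C) ⊗[k] (P ⊗[k] C) →ₗ[k] P ⊗[k] C :=
  mulPC k P C
    ∘ₗ map LinearMap.id (mulPC k P C)
    ∘ₗ map LinearMap.id
        (map LinearMap.id (shat k P C ψC σ)
          ∘ₗ (TensorProduct.assoc k P C C).toLinearMap)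
    ∘ₗ map LinearMap.id
        (map (rhat k P C ψ ρ) LinearMap.id
          ∘ₗ (TensorProduct.assoc k C P C).symm.toLinearMap)
    ∘ₗ (TensorProduct.assoc k P C (P ⊗[k] C)).toLinearMap

/-- condition (i): `ρ(e,x) = x` for `x ∈ M` and `ρ(c,1) = ε(c)1` -/
def CondI : Prop :=
  (∀ x : P, x ∈ Msub k P C ψ e → ρ (e ⊗ₜ x) = x) ∧
    ∀ c : C, ρ (c ⊗ₜ (1 : P)) = ε k C c • (1 : P)

/-- condition (ii): `ρ̂` maps `C ⊗ M` into `M ⊗ C` -/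
def CondII : Prop :=
  ∀ (c : C) (x : P), x ∈ Msub k P C ψ e →
    rhat k P C ψ ρ (c ⊗ₜ x) ∈ MCsub k P C ψ e

/-- the right hand side of condition (iii): `(μ⊗id)∘(id⊗ρ̂)∘(ρ̂⊗id)` -/
def BmapIII : C ⊗[k] (P ⊗[k] P) →ₗ[k] P ⊗[k] C :=
  mulPC k P C
    ∘ₗ map LinearMap.id (rhat k P C ψ ρ)
    ∘ₗ (TensorProduct.assoc k P C P).toLinearMap
    ∘ₗ map (rhat k P C ψ ρ) LinearMap.id
    ∘ₗ (TensorProduct.assoc k C P P).symm.toLinearMap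

/-- condition (iii): twisted multiplicativity of `ρ` -/
def CondIII : Prop :=
  ∀ (c : C) (x y : P), x ∈ Msub k P C ψ e → y ∈ Msub k P C ψ e →
    rhat k P C ψ ρ (c ⊗ₜ (x * y)) = BmapIII k P C ψ ρ (c ⊗ₜ (x ⊗ₜ y))

/-- `σ` takes values in `M` -/
def SigmaIntoM : Prop := ∀ b c : C, σ (b ⊗ₜ c) ∈ Msub k P C ψ e

/-- condition (iv): `σ(e⊗c) = ε(c)1` and `σ(c₍₁₎⊗e_A) ⊗ c₍₂₎^A = 1 ⊗ c` -/
def CondIV : Prop :=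
  (∀ c : C, σ (e ⊗ₜ c) = ε k C c • (1 : P)) ∧
    ∀ c : C, shat k P C ψC σ (c ⊗ₜ e) = (1 : P) ⊗ₜ c

/-- `(ρ, σ)` are crossed product data: conditions (i)–(iv). -/
def IsCrossedData : Prop :=
  CondI k P C ψ e ρ ∧ CondII k P C ψ e ρ ∧ CondIII k P C ψ e ρ ∧
    SigmaIntoM k P C ψ e σ ∧ CondIV k P C e ψC σ

/-- left hand side of the cocycle condition (2.6) -/
def CocLHS : C ⊗[k] (C ⊗[k] C) →ₗ[k] P ⊗[k] C :=
  mulPC k P C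
    ∘ₗ map LinearMap.id (shat k P C ψC σ)
    ∘ₗ (TensorProduct.assoc k P C C).toLinearMap
    ∘ₗ map (rhat k P C ψ ρ) LinearMap.id
    ∘ₗ (TensorProduct.assoc k C P C).symm.toLinearMap
    ∘ₗ map LinearMap.id (shat k P C ψC σ)

/-- right hand side of the cocycle condition (2.6) -/
def CocRHS : C ⊗[k] (C ⊗[k] C) →ₗ[k] P ⊗[k] C :=
  mulPC k P C
    ∘ₗ map LinearMap.id (shat k P C ψC σ)
    ∘ₗ (TensorProduct.assoc k P C C).toLinearMap
    ∘ₗ map (shat k P C ψC σ) LinearMap.id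
    ∘ₗ (TensorProduct.assoc k C C C).symm.toLinearMap

/-- the cocycle condition (2.6) -/
def Cocycle : Prop := CocLHS k P C ψ ψC ρ σ = CocRHS k P C ψC σ

/-- left hand side of the twisted module condition (2.7) -/
def TwLHS : C ⊗[k] (C ⊗[k] P) →ₗ[k] P ⊗[k] C :=
  mulPC k P C
    ∘ₗ map LinearMap.id (shat k P C ψC σ)
    ∘ₗ (TensorProduct.assoc k P C C).toLinearMap
    ∘ₗ map (rhat k P C ψ ρ) LinearMap.id
    ∘ₗ (TensorProduct.assoc k C P C).symm.toLinearMap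
    ∘ₗ map LinearMap.id (rhat k P C ψ ρ)

/-- right hand side of the twisted module condition (2.7) -/
def TwRHS : C ⊗[k] (C ⊗[k] P) →ₗ[k] P ⊗[k] C :=
  mulPC k P C
    ∘ₗ map LinearMap.id (rhat k P C ψ ρ)
    ∘ₗ (TensorProduct.assoc k P C P).toLinearMap
    ∘ₗ map (shat k P C ψC σ) LinearMap.id
    ∘ₗ (TensorProduct.assoc k C C P).symm.toLinearMap

/-- the twisted module condition (2.7), for `x ∈ M` -/
def Twisted : Prop :=
  ∀ (a b : C) (x : P), x ∈ Msub k P C ψ e →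
    TwLHS k P C ψ ψC ρ σ (a ⊗ₜ (b ⊗ₜ x)) = TwRHS k P C ψ ψC ρ σ (a ⊗ₜ (b ⊗ₜ x))

end Entwine

namespace Entwine

section Gauge
variable (k : Type) [Field k] (P : Type) [Ring P] [Algebra k P]
    (C : Type) [AddCommGroup C] [Module k C] [Coalgebra k C]
    (ψ : C ⊗[k] P →ₗ[k] P ⊗[k] C) (e : C) (ψC : C ⊗[k] C →ₗ[k] C ⊗[k] C)
    (ρ : C ⊗[k] P →ₗ[k] P) (σ : C ⊗[k] C →ₗ[k] P)
    (γ γi : C →ₗ[k] P)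

/-- the covariance condition (2.16) for a gauge transformation `γ`:
`ψ^C₂₃∘ψ₁₂∘(id⊗γ⊗id)∘(id⊗Δ) = (γ⊗id⊗id)∘(Δ⊗id)∘ψ^C` -/
def Cov216 : Prop :=
  map LinearMap.id ψC
      ∘ₗ (TensorProduct.assoc k P C C).toLinearMap
      ∘ₗ map ψ LinearMap.id
      ∘ₗ (TensorProduct.assoc k C P C).symm.toLinearMap
      ∘ₗ map LinearMap.id (map γ LinearMap.id)
      ∘ₗ map LinearMap.id (Δ k C) =
    map γ LinearMap.id
      ∘ₗ (TensorProduct.assoc k C C C).toLinearMap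
      ∘ₗ map (Δ k C) LinearMap.id
      ∘ₗ ψC

/-- `ρ^γ(c ⊗ u) = γ(c₍₁₎) ρ(c₍₂₎ ⊗ u_α) γ⁻¹(c₍₃₎^α)` -/
def rhoGamma : C ⊗[k] P →ₗ[k] P :=
  μ k P
    ∘ₗ map γ (μ k P)
    ∘ₗ map LinearMap.id (map ρ γi)
    ∘ₗ map LinearMap.id (TensorProduct.assoc k C P C).symm.toLinearMap
    ∘ₗ map LinearMap.id (map LinearMap.id ψ)
    ∘ₗ map LinearMap.id (TensorProduct.assoc k C C P).toLinearMap
    ∘ₗ (TensorProduct.assoc k C (C ⊗[k] C) P).toLinearMap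
    ∘ₗ map (map LinearMap.id (Δ k C) ∘ₗ Δ k C) LinearMap.id

/-- `σ^γ(b ⊗ c) = γ(b₍₁₎) ρ(b₍₂₎ ⊗ γ(c_A₍₁₎)_α) σ(b₍₃₎^α ⊗ c_A₍₂₎) γ⁻¹(b₍₄₎^A)` -/
def sigmaGamma : C ⊗[k] C →ₗ[k] P :=
  μ k P
    ∘ₗ map γ LinearMap.id
    ∘ₗ map LinearMap.id (μ k P)
    ∘ₗ map LinearMap.id (map ρ (μ k P))
    ∘ₗ map LinearMap.id (TensorProduct.assoc k C P (P ⊗[k] P)).symm.toLinearMap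
    ∘ₗ map LinearMap.id (map LinearMap.id (map LinearMap.id (map σ γi)))
    ∘ₗ map LinearMap.id (map LinearMap.id
        (map LinearMap.id (TensorProduct.assoc k C C C).symm.toLinearMap))
    ∘ₗ map LinearMap.id (map LinearMap.id
        (TensorProduct.assoc k P C (C ⊗[k] C)).toLinearMap)
    ∘ₗ map LinearMap.id (map LinearMap.id (map ψ LinearMap.id))
    ∘ₗ map LinearMap.id (map LinearMap.id
        (TensorProduct.assoc k C P (C ⊗[k] C)).symm.toLinearMap)
    ∘ₗ map LinearMap.id (map LinearMap.id
        (map LinearMap.id (map γ LinearMap.id)))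
    ∘ₗ map LinearMap.id (map LinearMap.id
        (map LinearMap.id (TensorProduct.assoc k C C C).toLinearMap))
    ∘ₗ map LinearMap.id (map LinearMap.id
        (map LinearMap.id (map (Δ k C) LinearMap.id)))
    ∘ₗ map LinearMap.id (map LinearMap.id (map LinearMap.id ψC))
    ∘ₗ map LinearMap.id (map LinearMap.id (TensorProduct.assoc k C C C).toLinearMap)
    ∘ₗ map LinearMap.id (TensorProduct.assoc k C (C ⊗[k] C) C).toLinearMap
    ∘ₗ (TensorProduct.assoc k C (C ⊗[k] (C ⊗[k] C)) C).toLinearMap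
    ∘ₗ map (map LinearMap.id (map LinearMap.id (Δ k C))
        ∘ₗ map LinearMap.id (Δ k C) ∘ₗ Δ k C) LinearMap.id

/-- `Θ : x ⊗ c ↦ x γ(c₍₁₎) ⊗ c₍₂₎` -/
def ThetaGamma : P ⊗[k] C →ₗ[k] P ⊗[k] C :=
  mulPC k P C
    ∘ₗ map LinearMap.id (map γ LinearMap.id)
    ∘ₗ map LinearMap.id (Δ k C)

end Gauge

end Entwine

namespace Entwine

section Stmt15
variable (k : Type) [Field k] (P : Type) [Ring P] [Algebra k P]
    (C : Type) [AddCommGroup C] [Module k C] [Coalgebra k C]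
    (ψ : C ⊗[k] P →ₗ[k] P ⊗[k] C) (e : C) (ψC : C ⊗[k] C →ₗ[k] C ⊗[k] C)

/-- the covariance condition (2.19) for `Θ̃(c) = Θ(1 ⊗ c)`:
`ψ^C₂₃∘ψ₁₂∘(id⊗Θ̃) = (Θ̃⊗id)∘ψ^C` -/
def CovTheta (Θ : P ⊗[k] C →ₗ[k] P ⊗[k] C) : Prop :=
  (TensorProduct.assoc k P C C).symm.toLinearMap
      ∘ₗ map LinearMap.id ψC
      ∘ₗ (TensorProduct.assoc k P C C).toLinearMap
      ∘ₗ map ψ LinearMap.id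
      ∘ₗ (TensorProduct.assoc k C P C).symm.toLinearMap
      ∘ₗ map LinearMap.id (Θ ∘ₗ TensorProduct.mk k P C 1) =
    map (Θ ∘ₗ TensorProduct.mk k P C 1) LinearMap.id ∘ₗ ψC

/-- two crossed products `M ×_{ρ',σ'} C` and `M ×_{ρ,σ} C` are equivalent: there is
an algebra and left `M`-module isomorphism between them satisfying (2.19). -/
def EquivCrossed (ρ ρ' : C ⊗[k] P →ₗ[k] P) (σ σ' : C ⊗[k] C →ₗ[k] P) : Prop :=
  ∃ Θ : P ⊗[k] C →ₗ[k] P ⊗[k] C,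
    Set.BijOn Θ (MCsub k P C ψ e) (MCsub k P C ψ e) ∧
    (∀ x ∈ Msub k P C ψ e, ∀ w ∈ MCsub k P C ψ e,
      Θ (map (mulLeft k x) LinearMap.id w) = map (mulLeft k x) LinearMap.id (Θ w)) ∧
    Θ ((1 : P) ⊗ₜ e) = (1 : P) ⊗ₜ[k] e ∧
    (∀ u ∈ MCsub k P C ψ e, ∀ v ∈ MCsub k P C ψ e,
      Θ (prodX k P C ψ ψC ρ' σ' (u ⊗ₜ v)) = prodX k P C ψ ψC ρ σ (Θ u ⊗ₜ Θ v)) ∧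
    CovTheta k P C ψ ψC Θ

/-- the crossed product data `(ρ', σ')` is gauge equivalent to `(ρ, σ)`: for some
gauge transformation `γ`, `(ρ', σ')` is equivalent to `(ρ^γ, σ^γ)` in the sense
that `ρ̂' = ρ̂^γ` on `C ⊗ M` and `σ' = σ^γ`. -/
def GaugeEquiv (ρ ρ' : C ⊗[k] P →ₗ[k] P) (σ σ' : C ⊗[k] C →ₗ[k] P) : Prop :=
  ∃ γ γi : C →ₗ[k] P,
    (∀ c : C, γ c ∈ Msub k P C ψ e) ∧
    (∀ c : C, γi c ∈ Msub k P C ψ e) ∧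
    (μ k P ∘ₗ map γ γi ∘ₗ Δ k C = Algebra.linearMap k P ∘ₗ ε k C) ∧
    (μ k P ∘ₗ map γi γ ∘ₗ Δ k C = Algebra.linearMap k P ∘ₗ ε k C) ∧
    γ e = 1 ∧
    Cov216 k P C ψ ψC γ ∧
    (∀ (c : C) (x : P), x ∈ Msub k P C ψ e →
      rhat k P C ψ ρ' (c ⊗ₜ x) =
        rhat k P C ψ (rhoGamma k P C ψ ρ γ γi) (c ⊗ₜ x)) ∧
    (∀ b c : C, σ' (b ⊗ₜ c) = sigmaGamma k P C ψ ψC ρ σ γ γi (b ⊗ₜ c))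

end Stmt15

end Entwine

/-
The idea: a `C`-colinear map into a cofree comodule `X ⊗ C` is determined by its composite with
`id ⊗ ε`. The maps `ρ̂`, `σ̂` and the crossed product are colinear for coactions built from `Δ`,
`ψ` and `ψ^C`, and the covariance condition (2.19) at `e ⊗ c` makes `Θ̃` colinear, so that an
equivalence is `Θ_γ(x ⊗ c) = x γ(c₍₁₎) ⊗ c₍₂₎` with `γ = (id ⊗ ε) ∘ Θ̃`. Composition of the maps
`Θ_γ` is convolution, so bijectivity of `Θ_γ` on `M ⊗ C` is convolution invertibility of
`γ : C → M`. Multiplicativity of `Θ_γ` need only be tested on the products `(1 ⊗ c)(x ⊗ e)` and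
`(1 ⊗ b)(1 ⊗ c)`, where it says that `Θ_γ ∘ ρ̂'` and `Θ_γ ∘ σ̂'` are the products in
`M ×_{ρ,σ} C` of the `γ(c₍₁₎) ⊗ c₍₂₎`; applying `Θ_{γ⁻¹}` turns this into `ρ̂' = ρ̂^γ` and
`σ' = σ^γ`.
-/

namespace Entwine

section Comodule

variable {R : Type*} [CommSemiring R] {C : Type*} [AddCommMonoid C] [Module R C]
  {D E F X Y : Type*} [AddCommMonoid D] [Module R D] [AddCommMonoid E] [Module R E]
  [AddCommMonoid F] [Module R F] [AddCommMonoid X] [Module R X] [AddCommMonoid Y] [Module R Y]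

theorem map_comp_id_apply (w : E →ₗ[R] F) (v : D →ₗ[R] E) (t : D ⊗[R] C) :
    map (w ∘ₗ v) (LinearMap.id : C →ₗ[R] C) t = map w LinearMap.id (map v LinearMap.id t) :=
  LinearMap.rTensor_comp_apply C w v t

/-- Right `C`-colinearity of `v` with respect to coactions `δ` and `δ'`. Coactions are plain linear
maps; coassociativity of `δ` is the statement `IsColinear δ coact δ`. -/
def IsColinear (δ : D →ₗ[R] D ⊗[R] C) (δ' : E →ₗ[R] E ⊗[R] C) (v : D →ₗ[R] E) : Prop :=
  δ' ∘ₗ v = map v LinearMap.id ∘ₗ δ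

variable {δ : D →ₗ[R] D ⊗[R] C} {δ' : E →ₗ[R] E ⊗[R] C} {δ'' : F →ₗ[R] F ⊗[R] C}

namespace IsColinear

theorem apply {v : D →ₗ[R] E} (h : IsColinear δ δ' v) (t : D) :
    δ' (v t) = map v LinearMap.id (δ t) :=
  LinearMap.congr_fun h t

theorem comp {w : E →ₗ[R] F} {v : D →ₗ[R] E} (hw : IsColinear δ' δ'' w)
    (hv : IsColinear δ δ' v) : IsColinear δ δ'' (w ∘ₗ v) :=
  LinearMap.ext fun t => by
    simp only [LinearMap.comp_apply, hw.apply, hv.apply, map_comp_id_apply]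

end IsColinear

variable [Coalgebra R C]

/-- The coaction of the cofree right `C`-comodule on `X`. -/
def coact : X ⊗[R] C →ₗ[R] (X ⊗[R] C) ⊗[R] C :=
  (TensorProduct.assoc R X C C).symm.toLinearMap ∘ₗ map LinearMap.id Coalgebra.comul

/-- The universal map from the cofree right `C`-comodule on `X` to `X`. -/
def counitR : X ⊗[R] C →ₗ[R] X :=
  (TensorProduct.rid R X).toLinearMap ∘ₗ map LinearMap.id Coalgebra.counit

theorem coact_tmul (x : X) (c : C) :
    coact (R := R) (x ⊗ₜ[R] c) =
      map (TensorProduct.mk R X C x) LinearMap.id (Coalgebra.comul c) := by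
  rw [coact, LinearMap.comp_apply, map_tmul, LinearMap.id_apply]
  induction Coalgebra.comul (R := R) c with
  | zero => simp
  | add s t hs ht => simp only [tmul_add, map_add, hs, ht]
  | tmul a b => simp

@[simp]
theorem counitR_tmul (x : X) (c : C) :
    counitR (x ⊗ₜ[R] c) = Coalgebra.counit (R := R) c • x := by
  simp [counitR]

theorem counitR_map (f : X →ₗ[R] Y) (t : X ⊗[R] C) :
    counitR (map f LinearMap.id t) = f (counitR t) := by
  induction t with
  | zero => simp
  | add s t hs ht => simp only [map_add, hs, ht]
  | tmul x c => simp

theorem map_counit_comul (c : C) :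
    map Coalgebra.counit LinearMap.id (Coalgebra.comul (R := R) c) = 1 ⊗ₜ[R] c :=
  Coalgebra.rTensor_counit_comul c

theorem counitR_comul (c : C) : counitR (Coalgebra.comul (R := R) c) = c :=
  (congrArg (TensorProduct.rid R C) (Coalgebra.lTensor_counit_comul c)).trans (by simp)

theorem map_counitR_coact (t : X ⊗[R] C) : map counitR LinearMap.id (coact t) = t := by
  induction t with
  | zero => simp
  | add s t hs ht => simp only [map_add, hs, ht]
  | tmul x c =>
    have h : counitR ∘ₗ TensorProduct.mk R X C x =
        LinearMap.toSpanSingleton R X x ∘ₗ Coalgebra.counit := by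
      ext; simp
    rw [coact_tmul, ← map_comp_id_apply, h, map_comp_id_apply, map_counit_comul]
    simp

theorem IsColinear.eq_map_counitR {v : D →ₗ[R] X ⊗[R] C} (hv : IsColinear δ coact v) :
    v = map (counitR ∘ₗ v) LinearMap.id ∘ₗ δ :=
  LinearMap.ext fun t => by
    rw [LinearMap.comp_apply, map_comp_id_apply, ← hv.apply, map_counitR_coact]

theorem isColinear_map (f : X →ₗ[R] Y) :
    IsColinear coact coact (map f (LinearMap.id : C →ₗ[R] C)) :=
  TensorProduct.ext' fun x c => by
    simp only [LinearMap.comp_apply, map_tmul, coact_tmul, ← map_comp_id_apply]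
    rfl

theorem isColinear_comul : IsColinear Coalgebra.comul coact (Coalgebra.comul : C →ₗ[R] C ⊗[R] C) :=
  Coalgebra.coassoc_symm

theorem isColinear_coact : IsColinear coact coact (coact : X ⊗[R] C →ₗ[R] (X ⊗[R] C) ⊗[R] C) :=
  TensorProduct.ext' fun x c => by
    simp only [LinearMap.comp_apply, coact_tmul]
    rw [(isColinear_map _).apply, isColinear_comul.apply, ← map_comp_id_apply, ← map_comp_id_apply]
    congr 2

end Comodule

section TwistedTensor

variable {R : Type*} [CommSemiring R] {C : Type*} [AddCommMonoid C] [Module R C]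
  {A B D E : Type*} [AddCommMonoid A] [Module R A] [AddCommMonoid B] [Module R B]
  [AddCommMonoid D] [Module R D] [AddCommMonoid E] [Module R E]

/-- The map `(d ⊗ c) ⊗ a ↦ d ⊗ τ(c ⊗ a)`. -/
def twistSwap (τ : C ⊗[R] A →ₗ[R] A ⊗[R] C) : (D ⊗[R] C) ⊗[R] A →ₗ[R] (D ⊗[R] A) ⊗[R] C :=
  (TensorProduct.assoc R D A C).symm.toLinearMap ∘ₗ map LinearMap.id τ ∘ₗ
    (TensorProduct.assoc R D C A).toLinearMap

/-- The coaction `d ⊗ a ↦ d₍₀₎ ⊗ τ(d₍₁₎ ⊗ a)` on `D ⊗ A` built from a coaction `δ` on `D` and a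
twist `τ`. With it, `ρ̂` and `σ̂` are the colinear maps extending `ρ` and `σ`. -/
def twistCoact (δ : D →ₗ[R] D ⊗[R] C) (τ : C ⊗[R] A →ₗ[R] A ⊗[R] C) :
    D ⊗[R] A →ₗ[R] (D ⊗[R] A) ⊗[R] C :=
  twistSwap τ ∘ₗ map δ LinearMap.id

/-- The twist of `C` past `A ⊗ B` obtained by passing first `A` and then `B`. -/
def twistComp (τ : C ⊗[R] A →ₗ[R] A ⊗[R] C) (τ' : C ⊗[R] B →ₗ[R] B ⊗[R] C) :
    C ⊗[R] (A ⊗[R] B) →ₗ[R] (A ⊗[R] B) ⊗[R] C :=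
  twistSwap τ' ∘ₗ map τ LinearMap.id ∘ₗ (TensorProduct.assoc R C A B).symm.toLinearMap

variable {τ : C ⊗[R] A →ₗ[R] A ⊗[R] C} {τ' : C ⊗[R] B →ₗ[R] B ⊗[R] C}
  {δ : D →ₗ[R] D ⊗[R] C} {δ' : E →ₗ[R] E ⊗[R] C}

theorem twistSwap_tmul (d : D) (c : C) (a : A) :
    twistSwap τ ((d ⊗ₜ c) ⊗ₜ[R] a) = map (TensorProduct.mk R D A d) LinearMap.id (τ (c ⊗ₜ a)) := by
  simp only [twistSwap, LinearMap.comp_apply, LinearEquiv.coe_coe, assoc_tmul, map_tmul,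
    LinearMap.id_apply]
  induction τ (c ⊗ₜ a) with
  | zero => simp
  | add s t hs ht => simp only [tmul_add, map_add, hs, ht]
  | tmul a' c' => simp

theorem twistCoact_tmul (d : D) (a : A) : twistCoact δ τ (d ⊗ₜ a) = twistSwap τ (δ d ⊗ₜ a) :=
  rfl

theorem twistSwap_comp_map {f : D →ₗ[R] E} {g : A →ₗ[R] B}
    (hg : τ' ∘ₗ map LinearMap.id g = map g LinearMap.id ∘ₗ τ) :
    twistSwap τ' ∘ₗ map (map f LinearMap.id) g = map (map f g) LinearMap.id ∘ₗ twistSwap τ := by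
  refine TensorProduct.ext_threefold fun d c a => ?_
  have h : τ' (c ⊗ₜ g a) = map g LinearMap.id (τ (c ⊗ₜ a)) := LinearMap.congr_fun hg (c ⊗ₜ a)
  simp only [LinearMap.comp_apply, map_tmul, LinearMap.id_apply, twistSwap_tmul, h, map_map]
  rfl

theorem IsColinear.tensor {f : D →ₗ[R] E} {g : A →ₗ[R] B} (hf : IsColinear δ δ' f)
    (hg : τ' ∘ₗ map LinearMap.id g = map g LinearMap.id ∘ₗ τ) :
    IsColinear (twistCoact δ τ) (twistCoact δ' τ') (map f g) :=
  TensorProduct.ext' fun d a => by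
    simp only [LinearMap.comp_apply, map_tmul, twistCoact_tmul, hf.apply]
    exact LinearMap.congr_fun (twistSwap_comp_map hg) (δ d ⊗ₜ a)

theorem IsColinear.map_id {f : D →ₗ[R] E} (hf : IsColinear δ δ' f) :
    IsColinear (twistCoact δ τ) (twistCoact δ' τ) (map f LinearMap.id) :=
  hf.tensor (by rw [TensorProduct.map_id, TensorProduct.map_id]; rfl)

theorem isColinear_assoc_symm :
    IsColinear (twistCoact δ (twistComp τ τ')) (twistCoact (twistCoact δ τ) τ')
      (TensorProduct.assoc R D A B).symm.toLinearMap := by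
  refine TensorProduct.ext' fun d w => ?_
  induction w with
  | zero => simp
  | add s t hs ht => simp only [tmul_add, map_add, hs, ht]
  | tmul a b =>
    simp only [LinearMap.comp_apply, LinearEquiv.coe_coe, assoc_symm_tmul, twistCoact_tmul]
    induction δ d with
    | zero => simp
    | add s t hs ht => simp only [add_tmul, map_add, hs, ht]
    | tmul x c =>
      simp only [twistSwap_tmul, twistComp, LinearMap.comp_apply, LinearEquiv.coe_coe,
        assoc_symm_tmul, map_tmul, LinearMap.id_apply]
      induction τ (c ⊗ₜ a) with
      | zero => simp
      | add s t hs ht => simp only [add_tmul, map_add, hs, ht]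
      | tmul a' c' =>
        simp only [twistSwap_tmul, map_tmul, map_map, mk_apply, LinearMap.id_apply]
        rfl

variable [Coalgebra R C]

theorem isColinear_mk (d : D) :
    IsColinear Coalgebra.comul coact (TensorProduct.mk R D C d) :=
  LinearMap.ext fun c => coact_tmul d c

theorem isColinear_of_comp_mk {v : (D ⊗[R] C) ⊗[R] A →ₗ[R] E}
    (hv : ∀ d : D, IsColinear (twistCoact Coalgebra.comul τ) δ'
      (v ∘ₗ map (TensorProduct.mk R D C d) LinearMap.id)) :
    IsColinear (twistCoact coact τ) δ' v := by
  refine TensorProduct.ext_threefold fun d c a => ?_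
  have h := (hv d).apply (c ⊗ₜ a)
  rw [map_comp_id_apply, ← (isColinear_mk d).map_id.apply] at h
  exact h

theorem isColinear_twistSwap (hτ : IsColinear (twistCoact Coalgebra.comul τ) coact τ) :
    IsColinear (twistCoact coact τ) coact
      (twistSwap τ : (D ⊗[R] C) ⊗[R] A →ₗ[R] (D ⊗[R] A) ⊗[R] C) := by
  refine isColinear_of_comp_mk fun d => ?_
  have hd : twistSwap τ ∘ₗ map (TensorProduct.mk R D C d) LinearMap.id =
      map (TensorProduct.mk R D A d) LinearMap.id ∘ₗ τ :=
    TensorProduct.ext' fun c a => twistSwap_tmul d c a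
  rw [hd]
  exact (isColinear_map _).comp hτ

theorem isColinear_twistCoact (hδ : IsColinear δ coact δ)
    (hτ : IsColinear (twistCoact Coalgebra.comul τ) coact τ) :
    IsColinear (twistCoact δ τ) coact (twistCoact δ τ) :=
  (isColinear_twistSwap hτ).comp hδ.map_id

theorem counitR_twistSwap (hτ : counitR ∘ₗ τ =
      (TensorProduct.lid R A).toLinearMap ∘ₗ map Coalgebra.counit LinearMap.id)
    (t : (D ⊗[R] C) ⊗[R] A) : counitR (twistSwap τ t) = map counitR LinearMap.id t := by
  revert t
  refine LinearMap.congr_fun (f := counitR ∘ₗ twistSwap τ) (TensorProduct.ext_threefold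
    fun d c a => ?_)
  have h : counitR (τ (c ⊗ₜ a)) = Coalgebra.counit (R := R) c • a :=
    (LinearMap.congr_fun hτ (c ⊗ₜ a)).trans (by simp)
  simp [twistSwap_tmul, counitR_map, h, smul_tmul]

end TwistedTensor

section LeftExtension

variable {k : Type} [Field k] {P : Type} [Ring P] [Algebra k P]
  {C : Type} [AddCommGroup C] [Module k C] {A : Type*} [AddCommMonoid A] [Module k A]

theorem mulPC_tmul (p : P) (w : P ⊗[k] C) : mulPC k P C (p ⊗ₜ w) = p • w := by
  induction w with
  | zero => simp
  | add s t hs ht => simp only [tmul_add, map_add, smul_add, hs, ht]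
  | tmul q c => simp [mulPC, smul_tmul']

theorem map_mulLeft (p : P) (w : P ⊗[k] C) : map (mulLeft k p) LinearMap.id w = p • w := by
  induction w with
  | zero => simp
  | add s t hs ht => simp only [map_add, smul_add, hs, ht]
  | tmul q c => simp [smul_tmul']

/-- The left `P`-linear extension `(p ⊗ c) ⊗ a ↦ p f(c ⊗ a)` of `f`, through which the crossed
product factors (`prodX_eq`). -/
def leftExt (f : C ⊗[k] A →ₗ[k] P ⊗[k] C) : (P ⊗[k] C) ⊗[k] A →ₗ[k] P ⊗[k] C :=
  mulPC k P C ∘ₗ map LinearMap.id f ∘ₗ (TensorProduct.assoc k P C A).toLinearMap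

variable (f : C ⊗[k] A →ₗ[k] P ⊗[k] C)

theorem leftExt_tmul (p : P) (c : C) (a : A) :
    leftExt f ((p ⊗ₜ c) ⊗ₜ[k] a) = p • f (c ⊗ₜ a) := by
  simp [leftExt, mulPC_tmul]

theorem leftExt_smul (p : P) (w : P ⊗[k] C) (a : A) :
    leftExt f ((p • w) ⊗ₜ[k] a) = p • leftExt f (w ⊗ₜ a) := by
  induction w with
  | zero => simp
  | add s t hs ht => simp only [smul_add, add_tmul, map_add, hs, ht]
  | tmul q c => simp only [smul_tmul', leftExt_tmul, smul_smul, smul_eq_mul]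

variable [Coalgebra k C]

theorem counitR_smul (p : P) (w : P ⊗[k] C) : counitR (p • w) = p * counitR w := by
  rw [← map_mulLeft, counitR_map, mulLeft_apply]

theorem isColinear_leftExt {τ : C ⊗[k] A →ₗ[k] A ⊗[k] C}
    (hf : IsColinear (twistCoact (Δ k C) τ) coact f) :
    IsColinear (twistCoact coact τ) coact (leftExt f) := by
  refine isColinear_of_comp_mk fun p => ?_
  have hp : leftExt f ∘ₗ map (TensorProduct.mk k P C p) LinearMap.id =
      map (mulLeft k p) LinearMap.id ∘ₗ f :=
    TensorProduct.ext' fun c a => by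
      rw [LinearMap.comp_apply, LinearMap.comp_apply, map_mulLeft]
      exact leftExt_tmul f p c a
  rw [hp]
  exact (isColinear_map _).comp hf

end LeftExtension

section CrossedProduct

variable {k : Type} [Field k] {P : Type} [Ring P] [Algebra k P]
  {C : Type} [AddCommGroup C] [Module k C] [Coalgebra k C]
  {ψ : C ⊗[k] P →ₗ[k] P ⊗[k] C} {ψC : C ⊗[k] C →ₗ[k] C ⊗[k] C}

theorem AxComul.isColinear (h : AxComul k P C ψ) : IsColinear (twistCoact (Δ k C) ψ) coact ψ := by
  rw [IsColinear, coact, LinearMap.comp_assoc, h]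
  exact LinearMap.ext fun t => (TensorProduct.assoc k P C C).symm_apply_apply _

theorem AxPsiCComul.isColinear (h : AxPsiCComul k C ψC) :
    IsColinear (twistCoact (Δ k C) ψC) coact ψC := by
  rw [IsColinear, coact, LinearMap.comp_assoc, h]
  exact LinearMap.ext fun t => (TensorProduct.assoc k C C C).symm_apply_apply _

variable (ρ : C ⊗[k] P →ₗ[k] P) (σ : C ⊗[k] C →ₗ[k] P)

theorem isColinear_rhat (hψ : AxComul k P C ψ) :
    IsColinear (twistCoact (Δ k C) ψ) coact (rhat k P C ψ ρ) :=
  (isColinear_map ρ).comp (isColinear_twistCoact isColinear_comul hψ.isColinear)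

theorem isColinear_shat (hψC : AxPsiCComul k C ψC) :
    IsColinear (twistCoact (Δ k C) ψC) coact (shat k P C ψC σ) :=
  (isColinear_map σ).comp (isColinear_twistCoact isColinear_comul hψC.isColinear)

theorem counitR_shat (hε : AxPsiCCounit k C ψC) (t : C ⊗[k] C) :
    counitR (shat k P C ψC σ t) = σ t := by
  have h : shat k P C ψC σ t = map σ LinearMap.id (twistSwap ψC (map (Δ k C) LinearMap.id t)) := rfl
  have hΔ : (counitR ∘ₗ Δ k C : C →ₗ[k] C) = LinearMap.id := LinearMap.ext counitR_comul
  rw [h, counitR_map, counitR_twistSwap hε, ← map_comp_id_apply, hΔ, TensorProduct.map_id,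
    LinearMap.id_apply]

theorem prodX_eq : prodX k P C ψ ψC ρ σ =
    leftExt (shat k P C ψC σ) ∘ₗ map (leftExt (rhat k P C ψ ρ)) LinearMap.id ∘ₗ
      (TensorProduct.assoc k (P ⊗[k] C) P C).symm.toLinearMap := by
  ext p c q d
  simp only [prodX, LinearMap.comp_apply, LinearEquiv.coe_coe, assoc_tmul, assoc_symm_tmul,
    map_tmul, LinearMap.id_apply, mulPC_tmul, leftExt_tmul, leftExt_smul,
    AlgebraTensorModule.curry_apply, restrictScalars_self, curry_apply]
  rfl

theorem prodX_tmul (u : P ⊗[k] C) (q : P) (d : C) :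
    prodX k P C ψ ψC ρ σ (u ⊗ₜ (q ⊗ₜ d)) =
      leftExt (shat k P C ψC σ) (leftExt (rhat k P C ψ ρ) (u ⊗ₜ q) ⊗ₜ d) := by
  rw [prodX_eq]
  rfl

theorem prodX_smul (p : P) (u v : P ⊗[k] C) :
    prodX k P C ψ ψC ρ σ ((p • u) ⊗ₜ v) = p • prodX k P C ψ ψC ρ σ (u ⊗ₜ v) := by
  induction v with
  | zero => simp
  | add s t hs ht => simp only [tmul_add, map_add, smul_add, hs, ht]
  | tmul q d => simp only [prodX_tmul, leftExt_smul]

theorem isColinear_prodX (hψ : AxComul k P C ψ) (hψC : AxPsiCComul k C ψC) :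
    IsColinear (twistCoact coact (twistComp ψ ψC)) coact (prodX k P C ψ ψC ρ σ) := by
  rw [prodX_eq]
  exact (isColinear_leftExt _ (isColinear_shat σ hψC)).comp
    ((isColinear_leftExt _ (isColinear_rhat ρ hψ)).map_id.comp isColinear_assoc_symm)

end CrossedProduct

section GaugeMap

variable {k : Type} [Field k] {P : Type} [Ring P] [Algebra k P]
  {C : Type} [AddCommGroup C] [Module k C]

/-- The map `p ⊗ c ↦ p γ(c)`, of which `Θ` is the colinear extension. -/
def mulGauge (γ : C →ₗ[k] P) : P ⊗[k] C →ₗ[k] P :=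
  μ k P ∘ₗ map LinearMap.id γ

@[simp]
theorem mulGauge_tmul (γ : C →ₗ[k] P) (p : P) (c : C) : mulGauge γ (p ⊗ₜ[k] c) = p * γ c := by
  simp [mulGauge]

variable [Coalgebra k C]

/-- The colinear map `c ↦ γ(c₍₁₎) ⊗ c₍₂₎`, the restriction of `Θ` to `1 ⊗ C`. -/
def gaugeMap (γ : C →ₗ[k] P) : C →ₗ[k] P ⊗[k] C :=
  map γ LinearMap.id ∘ₗ Δ k C

variable (γ γi : C →ₗ[k] P)

theorem isColinear_gaugeMap : IsColinear (Δ k C) coact (gaugeMap γ) :=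
  (isColinear_map γ).comp isColinear_comul

theorem thetaGamma_tmul (p : P) (c : C) : ThetaGamma k P C γ (p ⊗ₜ c) = p • gaugeMap γ c := by
  simp [ThetaGamma, gaugeMap, mulPC_tmul]

theorem thetaGamma_smul (p : P) (w : P ⊗[k] C) :
    ThetaGamma k P C γ (p • w) = p • ThetaGamma k P C γ w := by
  induction w with
  | zero => simp
  | add s t hs ht => simp only [smul_add, map_add, hs, ht]
  | tmul q c => simp only [smul_tmul', thetaGamma_tmul, smul_smul, smul_eq_mul]

theorem thetaGamma_eq : ThetaGamma k P C γ = map (mulGauge γ) LinearMap.id ∘ₗ coact := by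
  refine TensorProduct.ext' fun p c => ?_
  have h : mulGauge γ ∘ₗ TensorProduct.mk k P C p = mulLeft k p ∘ₗ γ := by
    ext; simp
  rw [thetaGamma_tmul, LinearMap.comp_apply, coact_tmul, ← map_comp_id_apply, h,
    map_comp_id_apply, map_mulLeft]
  rfl

theorem isColinear_thetaGamma : IsColinear coact coact (ThetaGamma k P C γ) := by
  rw [thetaGamma_eq]
  exact (isColinear_map _).comp isColinear_coact

theorem thetaGamma_comp_of_isColinear {D : Type*} [AddCommMonoid D] [Module k D]
    {δ : D →ₗ[k] D ⊗[k] C} {v : D →ₗ[k] P ⊗[k] C} (hv : IsColinear δ coact v) :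
    ThetaGamma k P C γ ∘ₗ v = map (mulGauge γ ∘ₗ v) LinearMap.id ∘ₗ δ :=
  LinearMap.ext fun t => by
    rw [thetaGamma_eq, LinearMap.comp_apply, LinearMap.comp_apply, LinearMap.comp_apply,
      hv.apply, map_comp_id_apply]

theorem thetaGamma_comp_gaugeMap :
    ThetaGamma k P C γi ∘ₗ gaugeMap γ = gaugeMap (μ k P ∘ₗ map γ γi ∘ₗ Δ k C) := by
  have h : mulGauge γi ∘ₗ gaugeMap γ = μ k P ∘ₗ map γ γi ∘ₗ Δ k C := by
    rw [mulGauge, gaugeMap, LinearMap.comp_assoc, ← LinearMap.comp_assoc (Δ k C),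
      ← TensorProduct.map_comp, LinearMap.id_comp, LinearMap.comp_id]
  rw [thetaGamma_comp_of_isColinear γi (isColinear_gaugeMap γ), h]
  rfl

theorem thetaGamma_comp :
    ThetaGamma k P C γi ∘ₗ ThetaGamma k P C γ =
      ThetaGamma k P C (μ k P ∘ₗ map γ γi ∘ₗ Δ k C) :=
  TensorProduct.ext' fun p c => by
    rw [LinearMap.comp_apply, thetaGamma_tmul, thetaGamma_smul, thetaGamma_tmul,
      ← thetaGamma_comp_gaugeMap, LinearMap.comp_apply]

theorem counitR_gaugeMap (c : C) : counitR (gaugeMap γ c) = γ c := by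
  rw [gaugeMap, LinearMap.comp_apply, counitR_map, counitR_comul]

theorem gaugeMap_counit (c : C) :
    gaugeMap (Algebra.linearMap k P ∘ₗ ε k C) c = (1 : P) ⊗ₜ c := by
  rw [gaugeMap, LinearMap.comp_apply, map_comp_id_apply, map_counit_comul, map_tmul]
  simp

/-- `γi` is a two-sided inverse of `γ` for the convolution product on `Hom(C, P)`. -/
def IsConvInverse (γ γi : C →ₗ[k] P) : Prop :=
  μ k P ∘ₗ map γ γi ∘ₗ Δ k C = Algebra.linearMap k P ∘ₗ ε k C ∧
    μ k P ∘ₗ map γi γ ∘ₗ Δ k C = Algebra.linearMap k P ∘ₗ ε k C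

theorem thetaGamma_comp_eq_id_iff :
    ThetaGamma k P C γi ∘ₗ ThetaGamma k P C γ = LinearMap.id ↔
      μ k P ∘ₗ map γ γi ∘ₗ Δ k C = Algebra.linearMap k P ∘ₗ ε k C := by
  rw [thetaGamma_comp]
  constructor
  · intro h
    ext c
    have hc := LinearMap.congr_fun h ((1 : P) ⊗ₜ c)
    rw [thetaGamma_tmul, one_smul, LinearMap.id_apply, ← gaugeMap_counit] at hc
    rw [← counitR_gaugeMap, hc, counitR_gaugeMap]
  · intro h
    refine TensorProduct.ext' fun p c => ?_
    rw [h, thetaGamma_tmul, gaugeMap_counit, smul_tmul', smul_eq_mul, mul_one, LinearMap.id_apply]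

theorem IsConvInverse.thetaGamma_eq_iff {γ γi : C →ₗ[k] P} (h : IsConvInverse γ γi)
    {w z : P ⊗[k] C} : ThetaGamma k P C γ w = z ↔ w = ThetaGamma k P C γi z := by
  have hl := LinearMap.congr_fun ((thetaGamma_comp_eq_id_iff γ γi).2 h.1)
  have hr := LinearMap.congr_fun ((thetaGamma_comp_eq_id_iff γi γ).2 h.2)
  exact ⟨fun hw => hw ▸ (hl w).symm, fun hz => hz ▸ hr z⟩

theorem eq_gaugeMap {v : C →ₗ[k] P ⊗[k] C} (hv : IsColinear (Δ k C) coact v) :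
    v = gaugeMap (counitR ∘ₗ v) :=
  hv.eq_map_counitR

theorem eq_thetaGamma {Θ : P ⊗[k] C →ₗ[k] P ⊗[k] C} (hΘ : IsColinear coact coact Θ)
    (hsmul : ∀ (p : P) (w : P ⊗[k] C), Θ (p • w) = p • Θ w) :
    Θ = ThetaGamma k P C (counitR ∘ₗ Θ ∘ₗ TensorProduct.mk k P C 1) :=
  TensorProduct.ext' fun p c => by
    rw [thetaGamma_tmul, ← eq_gaugeMap (hΘ.comp (isColinear_mk 1)), LinearMap.comp_apply,
      mk_apply, ← hsmul, smul_tmul', smul_eq_mul, mul_one]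

theorem exists_convInverse_of_bijective (h : Function.Bijective (ThetaGamma k P C γ)) :
    ∃ γi : C →ₗ[k] P, IsConvInverse γ γi := by
  let Θ := LinearEquiv.ofBijective (ThetaGamma k P C γ) h
  have hinv : Θ.symm.toLinearMap ∘ₗ ThetaGamma k P C γ = LinearMap.id :=
    LinearMap.ext fun w => Θ.symm_apply_apply w
  have hinv' : ThetaGamma k P C γ ∘ₗ Θ.symm.toLinearMap = LinearMap.id :=
    LinearMap.ext fun w => Θ.apply_symm_apply w
  have hcol : IsColinear coact coact Θ.symm.toLinearMap := LinearMap.ext fun w => by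
    have hw := (isColinear_thetaGamma γ).apply (Θ.symm w)
    rw [show ThetaGamma k P C γ (Θ.symm w) = w from Θ.apply_symm_apply w] at hw
    rw [LinearMap.comp_apply, LinearMap.comp_apply, hw, ← map_comp_id_apply, hinv,
      TensorProduct.map_id]
    rfl
  have hsmul (p : P) (w : P ⊗[k] C) : Θ.symm (p • w) = p • Θ.symm w := by
    rw [LinearEquiv.symm_apply_eq]
    exact (congrArg (p • ·) (Θ.apply_symm_apply w)).symm.trans (thetaGamma_smul γ p _).symm
  rw [eq_thetaGamma hcol hsmul] at hinv hinv'
  exact ⟨_, (thetaGamma_comp_eq_id_iff _ _).1 hinv, (thetaGamma_comp_eq_id_iff _ _).1 hinv'⟩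

end GaugeMap

section GaugedData

variable {k : Type} [Field k] {P : Type} [Ring P] [Algebra k P]
  {C : Type} [AddCommGroup C] [Module k C] [Coalgebra k C]
  {ψ : C ⊗[k] P →ₗ[k] P ⊗[k] C} {ψC : C ⊗[k] C →ₗ[k] C ⊗[k] C}
  (ρ : C ⊗[k] P →ₗ[k] P) (σ : C ⊗[k] C →ₗ[k] P) (γ γi : C →ₗ[k] P)

theorem cov216_iff : Cov216 k P C ψ ψC γ ↔
    twistComp ψ ψC ∘ₗ map LinearMap.id (gaugeMap γ) =
      map (gaugeMap γ) LinearMap.id ∘ₗ ψC := by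
  have hr : map (gaugeMap γ) LinearMap.id ∘ₗ ψC =
      (TensorProduct.assoc k P C C).symm.toLinearMap ∘ₗ map γ LinearMap.id ∘ₗ
        (TensorProduct.assoc k C C C).toLinearMap ∘ₗ map (Δ k C) LinearMap.id ∘ₗ ψC :=
    LinearMap.ext fun t => by
      simp only [LinearMap.comp_apply, LinearEquiv.coe_coe, gaugeMap, map_comp_id_apply]
      rw [LinearEquiv.eq_symm_apply, ← map_map_assoc, TensorProduct.map_id]
  have hl : twistComp ψ ψC ∘ₗ map LinearMap.id (gaugeMap γ) =
      (TensorProduct.assoc k P C C).symm.toLinearMap ∘ₗ map LinearMap.id ψC ∘ₗ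
        (TensorProduct.assoc k P C C).toLinearMap ∘ₗ map ψ LinearMap.id ∘ₗ
        (TensorProduct.assoc k C P C).symm.toLinearMap ∘ₗ
        map LinearMap.id (map γ LinearMap.id) ∘ₗ map LinearMap.id (Δ k C) := by
    ext b c
    simp [twistComp, twistSwap, gaugeMap]
  rw [hl, hr]
  exact ⟨fun h => congrArg _ h, fun h => LinearMap.ext fun t =>
    (TensorProduct.assoc k P C C).symm.injective (LinearMap.congr_fun h t)⟩

theorem rhoGamma_eq : rhoGamma k P C ψ ρ γ γi =
    mulGauge γi ∘ₗ leftExt (rhat k P C ψ ρ) ∘ₗ map (gaugeMap γ) LinearMap.id := by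
  refine TensorProduct.ext' fun b u => ?_
  simp only [rhoGamma, gaugeMap, LinearMap.comp_apply, map_tmul, LinearMap.id_apply,
    LinearEquiv.coe_coe]
  induction Δ k C b with
  | zero => simp
  | add s t hs ht => simp only [add_tmul, map_add, hs, ht]
  | tmul x y =>
    simp only [rhat, LinearMap.comp_apply, LinearEquiv.coe_coe, assoc_tmul, map_tmul,
      LinearMap.id_apply, leftExt_tmul]
    induction Δ k C y with
    | zero => simp
    | add s t hs ht => simp only [add_tmul, tmul_add, map_add, smul_add, hs, ht]
    | tmul z w =>
      simp only [assoc_tmul, map_tmul, LinearMap.id_apply]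
      induction ψ (w ⊗ₜ[k] u) with
      | zero => simp
      | add s t hs ht => simp only [tmul_add, map_add, smul_add, hs, ht]
      | tmul v w' => simp [smul_tmul', mul_assoc]

theorem rhat_rhoGamma (hψ : AxComul k P C ψ) :
    rhat k P C ψ (rhoGamma k P C ψ ρ γ γi) =
      ThetaGamma k P C γi ∘ₗ leftExt (rhat k P C ψ ρ) ∘ₗ map (gaugeMap γ) LinearMap.id := by
  rw [thetaGamma_comp_of_isColinear γi
    ((isColinear_leftExt _ (isColinear_rhat ρ hψ)).comp (isColinear_gaugeMap γ).map_id),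
    ← rhoGamma_eq]
  rfl

/-- The map `(x ⊗ y ⊗ z) ⊗ c ↦ γ(x) ρ(y ⊗ γ(c₍₁₎)_α) σ(z^α ⊗ c₍₂₎)`, the part of `σ^γ` to the left
of the convolution inverse of `γ`. -/
def sigmaGammaHead (ψ : C ⊗[k] P →ₗ[k] P ⊗[k] C) (ρ : C ⊗[k] P →ₗ[k] P)
    (σ : C ⊗[k] C →ₗ[k] P) (γ : C →ₗ[k] P) : (C ⊗[k] (C ⊗[k] C)) ⊗[k] C →ₗ[k] P :=
  μ k P ∘ₗ
    map γ (μ k P ∘ₗ map ρ σ ∘ₗ (TensorProduct.assoc k (C ⊗[k] P) C C).toLinearMap ∘ₗ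
      map (twistSwap ψ) LinearMap.id ∘ₗ (TensorProduct.assoc k (C ⊗[k] C) P C).symm.toLinearMap ∘ₗ
      map LinearMap.id (gaugeMap γ)) ∘ₗ
    (TensorProduct.assoc k C (C ⊗[k] C) C).toLinearMap

theorem counitR_leftExt_shat (hε : AxPsiCCounit k C ψC) (w : P ⊗[k] C) (d : C) :
    counitR (leftExt (shat k P C ψC σ) (w ⊗ₜ d)) =
      μ k P (map LinearMap.id σ (TensorProduct.assoc k P C C (w ⊗ₜ d))) := by
  induction w with
  | zero => simp
  | add s t hs ht => simp only [add_tmul, map_add, hs, ht]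
  | tmul p c => simp [leftExt_tmul, counitR_smul, counitR_shat σ hε]

theorem counitR_prodX_tmul (hε : AxPsiCCounit k C ψC) (p : P) (y : C) (w : P ⊗[k] C) :
    counitR (prodX k P C ψ ψC ρ σ ((p ⊗ₜ y) ⊗ₜ w)) =
      p * μ k P (map ρ σ (TensorProduct.assoc k (C ⊗[k] P) C C (map (twistSwap ψ) LinearMap.id
        ((TensorProduct.assoc k (C ⊗[k] C) P C).symm (Δ k C y ⊗ₜ w))))) := by
  induction w with
  | zero => simp
  | add s t hs ht => simp only [tmul_add, map_add, mul_add, hs, ht]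
  | tmul q d =>
    have hy : rhat k P C ψ ρ (y ⊗ₜ q) =
        map ρ LinearMap.id (twistSwap ψ (Δ k C y ⊗ₜ q)) := rfl
    rw [prodX_tmul, leftExt_tmul, leftExt_smul, counitR_smul, counitR_leftExt_shat σ hε, hy]
    congr 1
    simp only [assoc_symm_tmul, map_tmul, LinearMap.id_apply]
    induction twistSwap ψ (Δ k C y ⊗ₜ q) with
    | zero => simp
    | add s t hs ht => simp only [add_tmul, map_add, hs, ht]
    | tmul v z => simp

theorem counitR_prodX_gaugeMap (hε : AxPsiCCounit k C ψC) :
    counitR ∘ₗ prodX k P C ψ ψC ρ σ ∘ₗ map (gaugeMap γ) (gaugeMap γ) =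
      sigmaGammaHead ψ ρ σ γ ∘ₗ map (map LinearMap.id (Δ k C) ∘ₗ Δ k C) LinearMap.id := by
  refine TensorProduct.ext' fun b c => ?_
  have hb : gaugeMap γ b = map γ LinearMap.id (Δ k C b) := rfl
  simp only [LinearMap.comp_apply, map_tmul, LinearMap.id_apply, sigmaGammaHead,
    LinearEquiv.coe_coe, hb]
  induction Δ k C b with
  | zero => simp
  | add s t hs ht => simp only [add_tmul, map_add, hs, ht]
  | tmul x y =>
    simp only [map_tmul, LinearMap.id_apply, assoc_tmul, counitR_prodX_tmul ρ σ hε,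
      LinearMap.comp_apply, LinearEquiv.coe_coe, mul'_apply]

theorem map_comul_comul_eq : map (map LinearMap.id (Δ k C) ∘ₗ Δ k C) LinearMap.id ∘ₗ Δ k C =
    ((TensorProduct.assoc k C (C ⊗[k] C) C).symm.toLinearMap ∘ₗ
      map LinearMap.id (TensorProduct.assoc k C C C).symm.toLinearMap) ∘ₗ
      (map LinearMap.id (map LinearMap.id (Δ k C)) ∘ₗ map LinearMap.id (Δ k C) ∘ₗ Δ k C) := by
  have hid : map (LinearMap.id : C →ₗ[k] C) (map (Δ k C) LinearMap.id) ∘ₗ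
      map LinearMap.id (Δ k C) =
      map LinearMap.id ((TensorProduct.assoc k C C C).symm.toLinearMap) ∘ₗ
        map LinearMap.id (map LinearMap.id (Δ k C)) ∘ₗ map LinearMap.id (Δ k C) := by
    simp only [← TensorProduct.map_comp, LinearMap.id_comp]
    exact congrArg (map LinearMap.id) isColinear_comul.symm
  ext c
  have hc : map (Δ k C) LinearMap.id (Δ k C c) =
      (TensorProduct.assoc k C C C).symm (map LinearMap.id (Δ k C) (Δ k C c)) :=
    (isColinear_comul.apply c).symm
  simp only [LinearMap.comp_apply]
  rw [map_comp_id_apply, hc, map_map_assoc_symm]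
  exact congrArg (TensorProduct.assoc k C (C ⊗[k] C) C).symm (LinearMap.congr_fun hid (Δ k C c))

theorem mulGauge_comp_eq_sigmaGamma :
    mulGauge γi ∘ₗ map (sigmaGammaHead ψ ρ σ γ) LinearMap.id ∘ₗ twistSwap ψC ∘ₗ
        map (map (map LinearMap.id (Δ k C) ∘ₗ Δ k C) LinearMap.id ∘ₗ Δ k C) LinearMap.id =
      sigmaGamma k P C ψ ψC ρ σ γ γi := by
  refine TensorProduct.ext' fun b c => ?_
  rw [map_comul_comul_eq]
  simp only [sigmaGamma, LinearMap.comp_apply, map_tmul, LinearMap.id_apply, LinearEquiv.coe_coe]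
  induction map LinearMap.id (map LinearMap.id (Δ k C))
      (map LinearMap.id (Δ k C) (Δ k C b)) with
  | zero => simp
  | add s t hs ht => simp only [add_tmul, map_add, hs, ht]
  | tmul x yzw =>
    induction yzw with
    | zero => simp
    | add s t hs ht => simp only [tmul_add, add_tmul, map_add, hs, ht]
    | tmul y zw =>
      induction zw with
      | zero => simp
      | add s t hs ht => simp only [tmul_add, add_tmul, map_add, hs, ht]
      | tmul z w =>
        simp only [LinearEquiv.coe_coe, assoc_tmul, assoc_symm_tmul, map_tmul, LinearMap.id_apply,
          twistSwap_tmul]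
        induction ψC (w ⊗ₜ c) with
        | zero => simp
        | add s t hs ht => simp only [tmul_add, map_add, hs, ht]
        | tmul c' w' =>
          simp only [map_tmul, LinearMap.id_apply, mk_apply, sigmaGammaHead, LinearMap.comp_apply,
            LinearEquiv.coe_coe, assoc_tmul, gaugeMap]
          induction Δ k C c' with
          | zero => simp
          | add s t hs ht => simp only [tmul_add, add_tmul, map_add, hs, ht]
          | tmul s t =>
            simp only [map_tmul, LinearMap.id_apply, assoc_tmul, assoc_symm_tmul, twistSwap_tmul]
            induction ψ (z ⊗ₜ γ s) with
            | zero => simp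
            | add s t hs ht => simp only [tmul_add, add_tmul, map_add, hs, ht]
            | tmul q z' => simp [mul_assoc]

theorem sigmaGamma_eq (hψ : AxComul k P C ψ) (hψC : AxPsiCComul k C ψC)
    (hε : AxPsiCCounit k C ψC) (hcov : Cov216 k P C ψ ψC γ) :
    sigmaGamma k P C ψ ψC ρ σ γ γi =
      mulGauge γi ∘ₗ prodX k P C ψ ψC ρ σ ∘ₗ map (gaugeMap γ) (gaugeMap γ) := by
  have hcol := (isColinear_prodX ρ σ hψ hψC).comp
    ((isColinear_gaugeMap γ).tensor ((cov216_iff γ).1 hcov))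
  have hnat : twistSwap ψC ∘ₗ
      map (map (map LinearMap.id (Δ k C) ∘ₗ Δ k C) (LinearMap.id : C →ₗ[k] C)) LinearMap.id =
      map (map (map LinearMap.id (Δ k C) ∘ₗ Δ k C) LinearMap.id) LinearMap.id ∘ₗ twistSwap ψC :=
    twistSwap_comp_map (by rw [TensorProduct.map_id]; rfl)
  rw [hcol.eq_map_counitR, counitR_prodX_gaugeMap ρ σ γ hε, ← mulGauge_comp_eq_sigmaGamma]
  refine LinearMap.ext fun t => congrArg (mulGauge γi) ?_
  simp only [LinearMap.comp_apply, map_comp_id_apply]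
  exact congrArg (map (sigmaGammaHead ψ ρ σ γ) LinearMap.id)
    (LinearMap.congr_fun hnat (map (Δ k C) LinearMap.id t))

theorem shat_sigmaGamma (hψ : AxComul k P C ψ) (hψC : AxPsiCComul k C ψC)
    (hε : AxPsiCCounit k C ψC) (hcov : Cov216 k P C ψ ψC γ) :
    shat k P C ψC (sigmaGamma k P C ψ ψC ρ σ γ γi) =
      ThetaGamma k P C γi ∘ₗ prodX k P C ψ ψC ρ σ ∘ₗ map (gaugeMap γ) (gaugeMap γ) := by
  rw [thetaGamma_comp_of_isColinear γi
      ((isColinear_prodX ρ σ hψ hψC).comp ((isColinear_gaugeMap γ).tensor ((cov216_iff γ).1 hcov))),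
    ← sigmaGamma_eq ρ σ γ γi hψ hψC hε hcov]
  rfl

end GaugedData

section FixedPoints

variable {k : Type} [Field k] {P : Type} [Ring P] [Algebra k P]
  {C : Type} [AddCommGroup C] [Module k C]
  {ψ : C ⊗[k] P →ₗ[k] P ⊗[k] C} {e : C}

theorem one_mem_Msub (hone : AxOne k P C ψ) : (1 : P) ∈ Msub k P C ψ e :=
  hone e

theorem mul_mem_Msub (hmul : AxMul k P C ψ) {x y : P} (hx : x ∈ Msub k P C ψ e)
    (hy : y ∈ Msub k P C ψ e) : x * y ∈ Msub k P C ψ e := by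
  have hx' : ψ (e ⊗ₜ x) = x ⊗ₜ e := hx
  have hy' : ψ (e ⊗ₜ y) = y ⊗ₜ e := hy
  change ψ (e ⊗ₜ (x * y)) = (x * y) ⊗ₜ e
  simpa [hx', hy'] using LinearMap.congr_fun hmul (e ⊗ₜ[k] (x ⊗ₜ[k] y))

theorem tmul_mem_MCsub {x : P} (hx : x ∈ Msub k P C ψ e) (c : C) :
    x ⊗ₜ[k] c ∈ MCsub k P C ψ e :=
  ⟨⟨x, hx⟩ ⊗ₜ c, rfl⟩

@[elab_as_elim]
theorem MCsub_induction {motive : (w : P ⊗[k] C) → w ∈ MCsub k P C ψ e → Prop}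
    (tmul : ∀ (x : P) (hx : x ∈ Msub k P C ψ e) (c : C), motive (x ⊗ₜ c) (tmul_mem_MCsub hx c))
    (add : ∀ (s : P ⊗[k] C) (hs : s ∈ MCsub k P C ψ e) (t : P ⊗[k] C) (ht : t ∈ MCsub k P C ψ e),
      motive s hs → motive t ht → motive (s + t) (add_mem hs ht))
    {w : P ⊗[k] C} (hw : w ∈ MCsub k P C ψ e) : motive w hw := by
  obtain ⟨t, rfl⟩ := hw
  induction t with
  | zero =>
    have h := tmul 0 (zero_mem _) 0
    simp only [tmul_zero] at h
    simpa only [map_zero] using h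
  | add s t hs ht =>
    have h := add _ _ _ _ hs ht
    simpa only [map_add] using h
  | tmul x c => exact tmul x x.2 c

theorem smul_mem_MCsub (hmul : AxMul k P C ψ) {p : P} (hp : p ∈ Msub k P C ψ e) {w : P ⊗[k] C}
    (hw : w ∈ MCsub k P C ψ e) : p • w ∈ MCsub k P C ψ e := by
  induction hw using MCsub_induction with
  | tmul x hx c => exact tmul_mem_MCsub (mul_mem_Msub hmul hp hx) c
  | add s _ t _ hs ht => exact smul_add p s t ▸ add_mem hs ht

theorem map_mem_MCsub {D : Type*} [AddCommMonoid D] [Module k D] {f : D →ₗ[k] P}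
    (hf : ∀ d, f d ∈ Msub k P C ψ e) (t : D ⊗[k] C) :
    map f LinearMap.id t ∈ MCsub k P C ψ e := by
  induction t with
  | zero => simp
  | add s t hs ht => exact map_add (map f LinearMap.id) s t ▸ add_mem hs ht
  | tmul d c => exact tmul_mem_MCsub (hf d) c

theorem leftExt_mem_MCsub (hmul : AxMul k P C ψ) {A : Type*} [AddCommMonoid A] [Module k A]
    {f : C ⊗[k] A →ₗ[k] P ⊗[k] C} {a : A} (hf : ∀ c, f (c ⊗ₜ a) ∈ MCsub k P C ψ e)
    {w : P ⊗[k] C} (hw : w ∈ MCsub k P C ψ e) : leftExt f (w ⊗ₜ a) ∈ MCsub k P C ψ e := by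
  induction hw using MCsub_induction with
  | tmul x hx c => exact leftExt_tmul f x c a ▸ smul_mem_MCsub hmul hx (hf c)
  | add s _ t _ hs ht =>
    rw [add_tmul, map_add]
    exact add_mem hs ht

variable [Coalgebra k C] {ψC : C ⊗[k] C →ₗ[k] C ⊗[k] C}
  {ρ : C ⊗[k] P →ₗ[k] P} {σ : C ⊗[k] C →ₗ[k] P} {γ : C →ₗ[k] P}

theorem counitR_mem_Msub {w : P ⊗[k] C} (hw : w ∈ MCsub k P C ψ e) :
    counitR w ∈ Msub k P C ψ e := by
  induction hw using MCsub_induction with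
  | tmul x hx c =>
    rw [counitR_tmul]
    exact Submodule.smul_mem _ _ hx
  | add s _ t _ hs ht =>
    rw [map_add]
    exact add_mem hs ht

theorem gaugeMap_mem_MCsub (hγ : ∀ c, γ c ∈ Msub k P C ψ e) (c : C) :
    gaugeMap γ c ∈ MCsub k P C ψ e :=
  map_mem_MCsub hγ _

theorem thetaGamma_mem_MCsub (hmul : AxMul k P C ψ) (hγ : ∀ c, γ c ∈ Msub k P C ψ e)
    {w : P ⊗[k] C} (hw : w ∈ MCsub k P C ψ e) : ThetaGamma k P C γ w ∈ MCsub k P C ψ e := by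
  induction hw using MCsub_induction with
  | tmul x hx c => exact thetaGamma_tmul γ x c ▸ smul_mem_MCsub hmul hx (gaugeMap_mem_MCsub hγ c)
  | add s _ t _ hs ht => exact map_add (ThetaGamma k P C γ) s t ▸ add_mem hs ht

theorem SigmaIntoM.shat_mem_MCsub (hσ : SigmaIntoM k P C ψ e σ) (t : C ⊗[k] C) :
    shat k P C ψC σ t ∈ MCsub k P C ψ e := by
  refine map_mem_MCsub (fun d => ?_) _
  induction d with
  | zero => simp
  | add s t hs ht => exact map_add σ s t ▸ add_mem hs ht
  | tmul b c => exact hσ b c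

theorem prodX_mem_MCsub (hmul : AxMul k P C ψ) (hρ : CondII k P C ψ e ρ)
    (hσ : SigmaIntoM k P C ψ e σ) {u v : P ⊗[k] C} (hu : u ∈ MCsub k P C ψ e)
    (hv : v ∈ MCsub k P C ψ e) : prodX k P C ψ ψC ρ σ (u ⊗ₜ v) ∈ MCsub k P C ψ e := by
  induction hv using MCsub_induction with
  | tmul y hy d =>
    rw [prodX_tmul]
    exact leftExt_mem_MCsub hmul (fun c => hσ.shat_mem_MCsub _)
      (leftExt_mem_MCsub hmul (fun c => hρ c y hy) hu)
  | add s _ t _ hs ht =>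
    rw [tmul_add, map_add]
    exact add_mem hs ht

theorem twistComp_grouplike_tmul (hunit : AxPsiCUnit k C e ψC) {w : P ⊗[k] C}
    (hw : w ∈ MCsub k P C ψ e) : twistComp ψ ψC (e ⊗ₜ w) = coact w := by
  induction hw using MCsub_induction with
  | tmul x hx c =>
    have hx' : ψ (e ⊗ₜ x) = x ⊗ₜ e := hx
    simp only [twistComp, LinearMap.comp_apply, LinearEquiv.coe_coe, assoc_symm_tmul, map_tmul,
      hx', LinearMap.id_apply, twistSwap_tmul, coact_tmul]
    rw [hunit]
  | add s _ t _ hs ht => rw [tmul_add, map_add, map_add, hs, ht]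

theorem CondIV.leftExt_shat (hσ : CondIV k P C e ψC σ) (w : P ⊗[k] C) :
    leftExt (shat k P C ψC σ) (w ⊗ₜ e) = w := by
  induction w with
  | zero => simp
  | add s t hs ht => rw [add_tmul, map_add, hs, ht]
  | tmul p c => rw [leftExt_tmul, hσ.2, smul_tmul', smul_eq_mul, mul_one]

theorem CondI.rhat_one (hone : AxOne k P C ψ) (hρ : CondI k P C ψ e ρ) (c : C) :
    rhat k P C ψ ρ (c ⊗ₜ 1) = (1 : P) ⊗ₜ c := by
  rw [← gaugeMap_counit]
  simp only [rhat, gaugeMap, LinearMap.comp_apply, map_tmul, LinearMap.id_apply,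
    LinearEquiv.coe_coe]
  induction Δ k C c with
  | zero => simp
  | add s t hs ht => simp only [add_tmul, map_add, hs, ht]
  | tmul a b =>
    simp [hone b, hρ.2 a, Algebra.algebraMap_eq_smul_one]

theorem prodX_one_tmul_one_tmul (hone : AxOne k P C ψ) (hρ : CondI k P C ψ e ρ) (b c : C) :
    prodX k P C ψ ψC ρ σ ((1 ⊗ₜ b) ⊗ₜ (1 ⊗ₜ c)) = shat k P C ψC σ (b ⊗ₜ c) := by
  rw [prodX_tmul, leftExt_tmul, one_smul, hρ.rhat_one hone, leftExt_tmul, one_smul]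

theorem CondIV.prodX_tmul_grouplike (hσ : CondIV k P C e ψC σ) (u : P ⊗[k] C) (x : P) :
    prodX k P C ψ ψC ρ σ (u ⊗ₜ (x ⊗ₜ e)) = leftExt (rhat k P C ψ ρ) (u ⊗ₜ x) := by
  rw [prodX_tmul, hσ.leftExt_shat]

theorem CondIII.prodX_leftExt_rhat (hρ : CondIII k P C ψ e ρ) (u : P ⊗[k] C) {y : P}
    (hy : y ∈ Msub k P C ψ e) {w : P ⊗[k] C} (hw : w ∈ MCsub k P C ψ e) :
    prodX k P C ψ ψC ρ σ (leftExt (rhat k P C ψ ρ) (u ⊗ₜ y) ⊗ₜ w) =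
      prodX k P C ψ ψC ρ σ (u ⊗ₜ (y • w)) := by
  induction hw using MCsub_induction with
  | add s _ t _ hs ht => rw [tmul_add, map_add, hs, ht, smul_add, tmul_add, map_add]
  | tmul z hz d =>
    rw [smul_tmul', prodX_tmul, prodX_tmul]
    congr 2
    induction u with
    | zero => simp
    | add s t hs ht => simp only [add_tmul, map_add, hs, ht]
    | tmul p c =>
      rw [leftExt_tmul, leftExt_smul, leftExt_tmul, smul_eq_mul, hρ c y z hy hz]
      rfl

theorem IsGrouplike.gaugeMap_eq (he : IsGrouplike k C e) (h1 : γ e = 1) :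
    gaugeMap γ e = (1 : P) ⊗ₜ[k] e := by
  rw [gaugeMap, LinearMap.comp_apply, he.1, map_tmul, h1, LinearMap.id_apply]

end FixedPoints

section ConvolutionInverse

variable {k : Type} [Field k] {P : Type} [Ring P] [Algebra k P]
  {C : Type} [AddCommGroup C] [Module k C] [Coalgebra k C]

theorem IsConvInverse.algHom_comp {S : Type} [Ring S] [Algebra k S] (φ : S →ₐ[k] P)
    {α β : C →ₗ[k] S} (h : IsConvInverse α β) :
    IsConvInverse (φ.toLinearMap ∘ₗ α) (φ.toLinearMap ∘ₗ β) := by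
  have hμ : μ k P ∘ₗ map φ.toLinearMap φ.toLinearMap = φ.toLinearMap ∘ₗ μ k S :=
    TensorProduct.ext' fun x y => by simp
  have hη : φ.toLinearMap ∘ₗ Algebra.linearMap k S = Algebra.linearMap k P := by
    ext
    simp
  have hconv (f g : C →ₗ[k] S) : μ k P ∘ₗ map (φ.toLinearMap ∘ₗ f) (φ.toLinearMap ∘ₗ g) ∘ₗ Δ k C =
      φ.toLinearMap ∘ₗ μ k S ∘ₗ map f g ∘ₗ Δ k C := by
    rw [TensorProduct.map_comp, LinearMap.comp_assoc, ← LinearMap.comp_assoc _ _ (μ k P), hμ,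
      LinearMap.comp_assoc]
  constructor
  · rw [hconv, h.1, ← LinearMap.comp_assoc, hη]
  · rw [hconv, h.2, ← LinearMap.comp_assoc, hη]

theorem thetaGamma_map {S : Type} [Ring S] [Algebra k S] (φ : S →ₐ[k] P) (γ : C →ₗ[k] S)
    (w : S ⊗[k] C) :
    ThetaGamma k P C (φ.toLinearMap ∘ₗ γ) (map φ.toLinearMap LinearMap.id w) =
      map φ.toLinearMap LinearMap.id (ThetaGamma k S C γ w) := by
  have h : mulGauge (φ.toLinearMap ∘ₗ γ) ∘ₗ map φ.toLinearMap LinearMap.id =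
      φ.toLinearMap ∘ₗ mulGauge γ := TensorProduct.ext' fun x c => by simp
  rw [thetaGamma_eq, thetaGamma_eq, LinearMap.comp_apply, LinearMap.comp_apply,
    (isColinear_map _).apply, ← map_comp_id_apply, h, map_comp_id_apply]

variable {ψ : C ⊗[k] P →ₗ[k] P ⊗[k] C} {e : C}

/-- The fixed points `M` as a subalgebra of `P`. -/
def fixedSubalgebra (hmul : AxMul k P C ψ) (hone : AxOne k P C ψ) : Subalgebra k P :=
  (Msub k P C ψ e).toSubalgebra (one_mem_Msub hone) fun _ _ hx hy => mul_mem_Msub hmul hx hy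

variable {γ : C →ₗ[k] P}

theorem exists_convInverse_of_bijOn (hmul : AxMul k P C ψ) (hone : AxOne k P C ψ)
    (hγ : ∀ c, γ c ∈ Msub k P C ψ e)
    (h : Set.BijOn (ThetaGamma k P C γ) (MCsub k P C ψ e) (MCsub k P C ψ e)) :
    ∃ γi : C →ₗ[k] P, (∀ c, γi c ∈ Msub k P C ψ e) ∧ IsConvInverse γ γi := by
  let M : Subalgebra k P := fixedSubalgebra (e := e) hmul hone
  let γM : C →ₗ[k] M := γ.codRestrict (Msub k P C ψ e) hγ
  let J : M ⊗[k] C →ₗ[k] P ⊗[k] C := map M.val.toLinearMap LinearMap.id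
  have hJ : Function.Injective J :=
    Module.Flat.rTensor_preserves_injective_linearMap _ Subtype.val_injective
  have hJmem (w : M ⊗[k] C) : J w ∈ MCsub k P C ψ e := map_mem_MCsub (fun x => x.2) w
  have hnat (w : M ⊗[k] C) : ThetaGamma k P C γ (J w) = J (ThetaGamma k M C γM w) :=
    thetaGamma_map M.val γM w
  have hbij : Function.Bijective (ThetaGamma k M C γM) := by
    constructor
    · intro s t hst
      exact hJ (h.injOn (hJmem s) (hJmem t) (by rw [hnat, hnat, hst]))
    · intro w
      obtain ⟨_, ⟨s, rfl⟩, hs⟩ := h.surjOn (hJmem w)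
      exact ⟨s, hJ ((hnat s).symm.trans hs)⟩
  obtain ⟨γi, hγi⟩ := exists_convInverse_of_bijective γM hbij
  exact ⟨M.val.toLinearMap ∘ₗ γi, fun c => (γi c).2, hγi.algHom_comp M.val⟩

theorem bijOn_thetaGamma_iff (hmul : AxMul k P C ψ) (hone : AxOne k P C ψ)
    (hγ : ∀ c, γ c ∈ Msub k P C ψ e) :
    Set.BijOn (ThetaGamma k P C γ) (MCsub k P C ψ e) (MCsub k P C ψ e) ↔
      ∃ γi : C →ₗ[k] P, (∀ c, γi c ∈ Msub k P C ψ e) ∧ IsConvInverse γ γi := by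
  refine ⟨exists_convInverse_of_bijOn hmul hone hγ, ?_⟩
  rintro ⟨γi, hγi, hinv⟩
  refine Set.InvOn.bijOn ⟨fun w _ => ?_, fun w _ => ?_⟩
    (fun w hw => thetaGamma_mem_MCsub hmul hγ hw) (fun w hw => thetaGamma_mem_MCsub hmul hγi hw)
  · exact (hinv.thetaGamma_eq_iff.1 rfl).symm
  · exact hinv.thetaGamma_eq_iff.2 rfl

end ConvolutionInverse

section GaugeEquivalence

variable {k : Type} [Field k] {P : Type} [Ring P] [Algebra k P]
  {C : Type} [AddCommGroup C] [Module k C] [Coalgebra k C]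
  {ψ : C ⊗[k] P →ₗ[k] P ⊗[k] C} {e : C} {ψC : C ⊗[k] C →ₗ[k] C ⊗[k] C}
  {ρ ρ' : C ⊗[k] P →ₗ[k] P} {σ σ' : C ⊗[k] C →ₗ[k] P} {γ γi : C →ₗ[k] P}

theorem thetaGamma_leftExt_shat
    (hσ : ∀ b c : C, ThetaGamma k P C γ (shat k P C ψC σ' (b ⊗ₜ c)) =
      prodX k P C ψ ψC ρ σ (gaugeMap γ b ⊗ₜ gaugeMap γ c)) (w : P ⊗[k] C) (c : C) :
    ThetaGamma k P C γ (leftExt (shat k P C ψC σ') (w ⊗ₜ c)) =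
      prodX k P C ψ ψC ρ σ (ThetaGamma k P C γ w ⊗ₜ gaugeMap γ c) := by
  induction w with
  | zero => simp
  | add s t hs ht => simp only [add_tmul, map_add, hs, ht]
  | tmul p d => rw [leftExt_tmul, thetaGamma_smul, hσ, thetaGamma_tmul, prodX_smul]

theorem thetaGamma_prodX (hρ : CondIII k P C ψ e ρ) (hγ : ∀ c, γ c ∈ Msub k P C ψ e)
    (hact : ∀ (c : C), ∀ x ∈ Msub k P C ψ e, ThetaGamma k P C γ (rhat k P C ψ ρ' (c ⊗ₜ x)) =
      leftExt (rhat k P C ψ ρ) (gaugeMap γ c ⊗ₜ x))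
    (hcoc : ∀ b c : C, ThetaGamma k P C γ (shat k P C ψC σ' (b ⊗ₜ c)) =
      prodX k P C ψ ψC ρ σ (gaugeMap γ b ⊗ₜ gaugeMap γ c))
    (u : P ⊗[k] C) {v : P ⊗[k] C} (hv : v ∈ MCsub k P C ψ e) :
    ThetaGamma k P C γ (prodX k P C ψ ψC ρ' σ' (u ⊗ₜ v)) =
      prodX k P C ψ ψC ρ σ (ThetaGamma k P C γ u ⊗ₜ ThetaGamma k P C γ v) := by
  induction hv using MCsub_induction with
  | add s _ t _ hs ht => simp only [tmul_add, map_add, hs, ht]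
  | tmul y hy c =>
    induction u with
    | zero => simp
    | add s t hs ht => simp only [add_tmul, map_add, hs, ht]
    | tmul x b =>
      rw [prodX_tmul, thetaGamma_leftExt_shat hcoc, leftExt_tmul, thetaGamma_smul, hact b y hy,
        prodX_smul, hρ.prodX_leftExt_rhat _ hy (gaugeMap_mem_MCsub hγ c), thetaGamma_tmul,
        thetaGamma_tmul, prodX_smul]

theorem thetaGamma_prodX_iff (hone : AxOne k P C ψ) (he : IsGrouplike k C e)
    (hIII : CondIII k P C ψ e ρ) (hIV : CondIV k P C e ψC σ) (hI' : CondI k P C ψ e ρ')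
    (hIV' : CondIV k P C e ψC σ') (hγ : ∀ c, γ c ∈ Msub k P C ψ e) (hγe : γ e = 1) :
    (∀ u ∈ MCsub k P C ψ e, ∀ v ∈ MCsub k P C ψ e,
        ThetaGamma k P C γ (prodX k P C ψ ψC ρ' σ' (u ⊗ₜ v)) =
          prodX k P C ψ ψC ρ σ (ThetaGamma k P C γ u ⊗ₜ ThetaGamma k P C γ v)) ↔
      (∀ (c : C), ∀ x ∈ Msub k P C ψ e, ThetaGamma k P C γ (rhat k P C ψ ρ' (c ⊗ₜ x)) =
        leftExt (rhat k P C ψ ρ) (gaugeMap γ c ⊗ₜ x)) ∧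
      ∀ b c : C, ThetaGamma k P C γ (shat k P C ψC σ' (b ⊗ₜ c)) =
        prodX k P C ψ ψC ρ σ (gaugeMap γ b ⊗ₜ gaugeMap γ c) := by
  refine ⟨fun h => ⟨fun c x hx => ?_, fun b c => ?_⟩,
    fun h u _ v hv => thetaGamma_prodX hIII hγ h.1 h.2 u hv⟩
  · have hcx := h _ (tmul_mem_MCsub (one_mem_Msub hone) c) _ (tmul_mem_MCsub hx e)
    rwa [hIV'.prodX_tmul_grouplike, leftExt_tmul, one_smul, thetaGamma_tmul, one_smul,
      thetaGamma_tmul, he.gaugeMap_eq hγe, smul_tmul', smul_eq_mul, mul_one,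
      hIV.prodX_tmul_grouplike] at hcx
  · have hbc := h _ (tmul_mem_MCsub (one_mem_Msub hone) b) _ (tmul_mem_MCsub (one_mem_Msub hone) c)
    rwa [prodX_one_tmul_one_tmul hone hI', thetaGamma_tmul, one_smul, thetaGamma_tmul,
      one_smul] at hbc

theorem IsConvInverse.rhat_eq_rhat_rhoGamma_iff (hψ : AxComul k P C ψ) (h : IsConvInverse γ γi)
    (c : C) (x : P) :
    rhat k P C ψ ρ' (c ⊗ₜ x) = rhat k P C ψ (rhoGamma k P C ψ ρ γ γi) (c ⊗ₜ x) ↔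
      ThetaGamma k P C γ (rhat k P C ψ ρ' (c ⊗ₜ x)) =
        leftExt (rhat k P C ψ ρ) (gaugeMap γ c ⊗ₜ x) := by
  rw [h.thetaGamma_eq_iff, rhat_rhoGamma ρ γ γi hψ]
  rfl

theorem IsConvInverse.eq_sigmaGamma_iff (hψ : AxComul k P C ψ) (hψC : AxPsiCComul k C ψC)
    (hε : AxPsiCCounit k C ψC) (hcov : Cov216 k P C ψ ψC γ) (h : IsConvInverse γ γi) :
    (∀ b c : C, σ' (b ⊗ₜ c) = sigmaGamma k P C ψ ψC ρ σ γ γi (b ⊗ₜ c)) ↔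
      ∀ b c : C, ThetaGamma k P C γ (shat k P C ψC σ' (b ⊗ₜ c)) =
        prodX k P C ψ ψC ρ σ (gaugeMap γ b ⊗ₜ gaugeMap γ c) := by
  have hshat := shat_sigmaGamma ρ σ γ γi hψ hψC hε hcov
  simp only [h.thetaGamma_eq_iff]
  constructor
  · intro hσ b c
    rw [TensorProduct.ext' hσ, hshat]
    rfl
  · intro hσ b c
    have hbc : shat k P C ψC σ' (b ⊗ₜ c) =
        shat k P C ψC (sigmaGamma k P C ψ ψC ρ σ γ γi) (b ⊗ₜ c) := by
      rw [hσ, hshat]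
      rfl
    rw [← counitR_shat σ' hε, hbc, counitR_shat _ hε]

theorem CovTheta.isColinear {Θ : P ⊗[k] C →ₗ[k] P ⊗[k] C} (hcov : CovTheta k P C ψ ψC Θ)
    (hunit : AxPsiCUnit k C e ψC) (hΘ : ∀ c : C, Θ (1 ⊗ₜ c) ∈ MCsub k P C ψ e) :
    IsColinear (Δ k C) coact (Θ ∘ₗ TensorProduct.mk k P C 1) :=
  LinearMap.ext fun c => by
    have h : twistComp ψ ψC (e ⊗ₜ Θ (1 ⊗ₜ c)) =
        map (Θ ∘ₗ TensorProduct.mk k P C 1) LinearMap.id (ψC (e ⊗ₜ c)) :=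
      LinearMap.congr_fun hcov (e ⊗ₜ c)
    rwa [twistComp_grouplike_tmul hunit (hΘ c), hunit] at h

theorem covTheta_iff_cov216 {Θ : P ⊗[k] C →ₗ[k] P ⊗[k] C}
    (hΘ : Θ ∘ₗ TensorProduct.mk k P C 1 = gaugeMap γ) :
    CovTheta k P C ψ ψC Θ ↔ Cov216 k P C ψ ψC γ := by
  rw [CovTheta, hΘ, cov216_iff]
  rfl

theorem thetaGamma_comp_mk_one : ThetaGamma k P C γ ∘ₗ TensorProduct.mk k P C 1 = gaugeMap γ :=
  LinearMap.ext fun c => (thetaGamma_tmul γ 1 c).trans (one_smul P _)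

/-- `Θ_γ` is an equivalence from `M ×_{ρ',σ'} C` to `M ×_{ρ,σ} C`. Convolution invertibility of `γ`
is replaced here by bijectivity of `Θ_γ` on `M ⊗ C`, see `bijOn_thetaGamma_iff`. -/
structure InducesEquiv (ψ : C ⊗[k] P →ₗ[k] P ⊗[k] C) (e : C) (ψC : C ⊗[k] C →ₗ[k] C ⊗[k] C)
    (ρ ρ' : C ⊗[k] P →ₗ[k] P) (σ σ' : C ⊗[k] C →ₗ[k] P) (γ : C →ₗ[k] P) : Prop where
  mem_Msub : ∀ c, γ c ∈ Msub k P C ψ e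
  apply_grouplike : γ e = 1
  cov : Cov216 k P C ψ ψC γ
  bijOn : Set.BijOn (ThetaGamma k P C γ) (MCsub k P C ψ e) (MCsub k P C ψ e)
  map_prodX : ∀ u ∈ MCsub k P C ψ e, ∀ v ∈ MCsub k P C ψ e,
    ThetaGamma k P C γ (prodX k P C ψ ψC ρ' σ' (u ⊗ₜ v)) =
      prodX k P C ψ ψC ρ σ (ThetaGamma k P C γ u ⊗ₜ ThetaGamma k P C γ v)

theorem InducesEquiv.equivCrossed (h : InducesEquiv ψ e ψC ρ ρ' σ σ' γ)
    (he : IsGrouplike k C e) : EquivCrossed k P C ψ e ψC ρ ρ' σ σ' := by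
  refine ⟨ThetaGamma k P C γ, h.bijOn, fun x _ w _ => ?_, ?_, h.map_prodX,
    (covTheta_iff_cov216 thetaGamma_comp_mk_one).2 h.cov⟩
  · rw [map_mulLeft, map_mulLeft, thetaGamma_smul]
  · rw [thetaGamma_tmul, one_smul, he.gaugeMap_eq h.apply_grouplike]

theorem equivCrossed_iff (hdata : IsEntwiningData k P C ψ e ψC) (hρ' : CondII k P C ψ e ρ')
    (hσ' : SigmaIntoM k P C ψ e σ') :
    EquivCrossed k P C ψ e ψC ρ ρ' σ σ' ↔
      ∃ γ : C →ₗ[k] P, InducesEquiv ψ e ψC ρ ρ' σ σ' γ := by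
  obtain ⟨⟨hmul, hone, -, -⟩, he, -, -, hunit⟩ := hdata
  refine ⟨?_, fun ⟨_, hγ⟩ => hγ.equivCrossed he⟩
  rintro ⟨Θ, hbij, hlin, hΘe, hprod, hcov⟩
  have hmem (c : C) : Θ (1 ⊗ₜ c) ∈ MCsub k P C ψ e :=
    hbij.mapsTo (tmul_mem_MCsub (one_mem_Msub hone) c)
  let γ : C →ₗ[k] P := counitR ∘ₗ Θ ∘ₗ TensorProduct.mk k P C 1
  have hγ : Θ ∘ₗ TensorProduct.mk k P C 1 = gaugeMap γ :=
    eq_gaugeMap (hcov.isColinear hunit hmem)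
  have hΘγ : Set.EqOn Θ (ThetaGamma k P C γ) (MCsub k P C ψ e) := by
    intro w hw
    induction hw using MCsub_induction with
    | add s _ t _ hs ht => rw [map_add, map_add, hs, ht]
    | tmul x hx c =>
      have hxc := hlin x hx _ (tmul_mem_MCsub (one_mem_Msub hone) c)
      rw [map_tmul, mulLeft_apply, mul_one, LinearMap.id_apply, map_mulLeft] at hxc
      rw [hxc, thetaGamma_tmul, ← hγ]
      rfl
  refine ⟨γ, fun c => counitR_mem_Msub (hmem c), ?_, (covTheta_iff_cov216 hγ).1 hcov,
    hbij.congr hΘγ, fun u hu v hv => ?_⟩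
  · change counitR (Θ (1 ⊗ₜ e)) = 1
    rw [hΘe, counitR_tmul, he.2, one_smul]
  · rw [← hΘγ (prodX_mem_MCsub hmul hρ' hσ' hu hv), ← hΘγ hu, ← hΘγ hv, hprod u hu v hv]

theorem gaugeEquiv_iff (hdata : IsEntwiningData k P C ψ e ψC) (hIII : CondIII k P C ψ e ρ)
    (hIV : CondIV k P C e ψC σ) (hI' : CondI k P C ψ e ρ') (hIV' : CondIV k P C e ψC σ') :
    GaugeEquiv k P C ψ e ψC ρ ρ' σ σ' ↔
      ∃ γ : C →ₗ[k] P, InducesEquiv ψ e ψC ρ ρ' σ σ' γ := by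
  obtain ⟨⟨hmul, hone, hψ, -⟩, he, hψC, hε, -⟩ := hdata
  constructor
  · rintro ⟨γ, γi, hγ, hγi, hl, hr, hγe, hcov, hρ, hσ⟩
    have hinv : IsConvInverse γ γi := ⟨hl, hr⟩
    refine ⟨γ, hγ, hγe, hcov, (bijOn_thetaGamma_iff hmul hone hγ).2 ⟨γi, hγi, hinv⟩,
      (thetaGamma_prodX_iff hone he hIII hIV hI' hIV' hγ hγe).2 ⟨fun c x hx => ?_, ?_⟩⟩
    · exact (hinv.rhat_eq_rhat_rhoGamma_iff hψ c x).1 (hρ c x hx)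
    · exact (hinv.eq_sigmaGamma_iff hψ hψC hε hcov).1 hσ
  · rintro ⟨γ, hγ, hγe, hcov, hbij, hprod⟩
    obtain ⟨γi, hγi, hinv⟩ := (bijOn_thetaGamma_iff hmul hone hγ).1 hbij
    obtain ⟨hρ, hσ⟩ := (thetaGamma_prodX_iff hone he hIII hIV hI' hIV' hγ hγe).1 hprod
    refine ⟨γ, γi, hγ, hγi, hinv.1, hinv.2, hγe, hcov, fun c x hx => ?_, ?_⟩
    · exact (hinv.rhat_eq_rhat_rhoGamma_iff hψ c x).2 (hρ c x hx)
    · exact (hinv.eq_sigmaGamma_iff hψ hψC hε hcov).2 hσ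

theorem equiv_iff_gauge_equiv_general (hdata : IsEntwiningData k P C ψ e ψC)
    (hcross : IsCrossedData k P C ψ e ψC ρ σ) (hcross' : IsCrossedData k P C ψ e ψC ρ' σ') :
    EquivCrossed k P C ψ e ψC ρ ρ' σ σ' ↔ GaugeEquiv k P C ψ e ψC ρ ρ' σ σ' := by
  obtain ⟨-, -, hIII, -, hIV⟩ := hcross
  obtain ⟨hI', hII', -, hσ', hIV'⟩ := hcross'
  rw [equivCrossed_iff hdata hII' hσ', gaugeEquiv_iff hdata hIII hIV hI' hIV']

end GaugeEquivalence

section Stmt15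

variable (k : Type) [Field k] (P : Type) [Ring P] [Algebra k P]
    (C : Type) [AddCommGroup C] [Module k C] [Coalgebra k C]
    (ψ : C ⊗[k] P →ₗ[k] P ⊗[k] C) (e : C) (ψC : C ⊗[k] C →ₗ[k] C ⊗[k] C)

/-- (Proposition 3.2) Two crossed products built on the same
entwining data are equivalent if and only if their crossed product data are gauge
equivalent. -/
theorem equiv_iff_gauge_equiv
    (ρ ρ' : C ⊗[k] P →ₗ[k] P) (σ σ' : C ⊗[k] C →ₗ[k] P)
    (hdata : IsEntwiningData k P C ψ e ψC)
    (hcross : IsCrossedData k P C ψ e ψC ρ σ)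
    (hcoc : Cocycle k P C ψ ψC ρ σ)
    (htw : Twisted k P C ψ e ψC ρ σ)
    (hcross' : IsCrossedData k P C ψ e ψC ρ' σ')
    (hcoc' : Cocycle k P C ψ ψC ρ' σ')
    (htw' : Twisted k P C ψ e ψC ρ' σ') :
    EquivCrossed k P C ψ e ψC ρ ρ' σ σ' ↔ GaugeEquiv k P C ψ e ψC ρ ρ' σ σ' :=
  equiv_iff_gauge_equiv_general hdata hcross hcross'

end Stmt15

end Entwine
end
end

section
/- Let q ∈ k* and let P = E_q(2) be the k-algebra generated by v, v⁻¹, n, n̄ with relations vn = q²nv, vn̄ = q²n̄v, nn̄ = q²n̄n, vv⁻¹ = v⁻¹v = 1. Let C be the coalgebra with basis of group-like elements {c_p : p ∈ ℤ}, fix s ∈ ℤ and μ, ν ∈ k*, and let ψ : C ⊗ P → P ⊗ C be determined on generators by ψ(c_p ⊗ v) = v ⊗ c_{p+1}, ψ(c_p ⊗ v⁻¹) = v⁻¹ ⊗ c_{p−1}, ψ(c_p ⊗ n) = n ⊗ c_p + μq^{2p}v ⊗ c_p − μq^{2p}v ⊗ c_{p+1}, ψ(c_p ⊗ n̄) = n̄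 ⊗ c_p + νq^{2p}v⁻¹ ⊗ c_p − νq^{2p}v⁻¹ ⊗ c_{p−1}, extended by ψ∘(id ⊗ μ_P) = (μ_P ⊗ id)∘ψ₂₃∘ψ₁₂ and ψ(c_p ⊗ 1) = 1 ⊗ c_p. Then ψ is well-defined on P (it annihilates the ideal of relations) and satisfies the entwining axioms. -/
open TensorProduct LinearMap

noncomputable section

namespace Eq2Ex

variable (k : Type) [Field k] (q : kˣ)

/-- the defining relations of the quantum Euclidean group `E_q(2)`, on the free
algebra with generators `0 ↦ v`, `1 ↦ v⁻¹`, `2 ↦ n`, `3 ↦ n̄`: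
`vn = q²nv`, `vn̄ = q²n̄v`, `nn̄ = q²n̄n`, `vv⁻¹ = v⁻¹v = 1`. -/
inductive EqRel : FreeAlgebra k (Fin 4) → FreeAlgebra k (Fin 4) → Prop
  | vn : EqRel (FreeAlgebra.ι k 0 * FreeAlgebra.ι k 2)
      (((q : k) ^ 2) • (FreeAlgebra.ι k 2 * FreeAlgebra.ι k 0))
  | vnb : EqRel (FreeAlgebra.ι k 0 * FreeAlgebra.ι k 3)
      (((q : k) ^ 2) • (FreeAlgebra.ι k 3 * FreeAlgebra.ι k 0))
  | nnb : EqRel (FreeAlgebra.ι k 2 * FreeAlgebra.ι k 3)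
      (((q : k) ^ 2) • (FreeAlgebra.ι k 3 * FreeAlgebra.ι k 2))
  | vvi : EqRel (FreeAlgebra.ι k 0 * FreeAlgebra.ι k 1) 1
  | viv : EqRel (FreeAlgebra.ι k 1 * FreeAlgebra.ι k 0) 1

/-- the quantum Euclidean group `E_q(2)` -/
abbrev Eq2 : Type := RingQuot (EqRel k q)

/-- the generator `v` -/
def vE : Eq2 k q := RingQuot.mkAlgHom k (EqRel k q) (FreeAlgebra.ι k 0)
/-- the generator `v⁻¹` -/
def viE : Eq2 k q := RingQuot.mkAlgHom k (EqRel k q) (FreeAlgebra.ι k 1)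
/-- the generator `n` -/
def nE : Eq2 k q := RingQuot.mkAlgHom k (EqRel k q) (FreeAlgebra.ι k 2)
/-- the generator `n̄` -/
def nbE : Eq2 k q := RingQuot.mkAlgHom k (EqRel k q) (FreeAlgebra.ι k 3)

/-- the coalgebra `C` spanned by the group-like elements `c_p`, `p ∈ ℤ` -/
abbrev Cz : Type := ℤ →₀ k

/-- the group-like basis element `c_p` -/
def cz (p : ℤ) : Cz k := Finsupp.single p (1 : k)

variable (μv νv : kˣ) (s : ℤ)

/-- `ψ` takes the prescribed values on the generators of `E_q(2)`. -/
def PsiOnGens (ψ : Cz k ⊗[k] Eq2 k q →ₗ[k] Eq2 k q ⊗[k] Cz k) : Prop :=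
  (∀ p : ℤ, ψ (cz k p ⊗ₜ vE k q) = vE k q ⊗ₜ cz k (p + 1)) ∧
  (∀ p : ℤ, ψ (cz k p ⊗ₜ viE k q) = viE k q ⊗ₜ cz k (p - 1)) ∧
  (∀ p : ℤ, ψ (cz k p ⊗ₜ nE k q) =
    nE k q ⊗ₜ cz k p
      + ((μv : k) * ((q ^ (2 * p) : kˣ) : k)) • (vE k q ⊗ₜ cz k p)
      - ((μv : k) * ((q ^ (2 * p) : kˣ) : k)) • (vE k q ⊗ₜ cz k (p + 1))) ∧
  (∀ p : ℤ, ψ (cz k p ⊗ₜ nbE k q) =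
    nbE k q ⊗ₜ cz k p
      + ((νv : k) * ((q ^ (2 * p) : kˣ) : k)) • (viE k q ⊗ₜ cz k p)
      - ((νv : k) * ((q ^ (2 * p) : kˣ) : k)) • (viE k q ⊗ₜ cz k (p - 1)))

end Eq2Ex

/-!
A map `ψ : C ⊗ P → P ⊗ C` compatible with the algebra structure of `P` is the same thing as a right
action of `P` on the free left module `P ⊗ C` by `P`-linear maps. For `P = E_q(2)` such an action
amounts to four endomorphisms satisfying the defining relations in reversed order, which is the
well-definedness of `ψ`.

The remaining axioms say that `id ⊗ ε` and `id ⊗ Δ` intertwine this action with the right actions on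
`P` and on `(P ⊗ C) ⊗ C ≅ (P ⊗ C) ⊗_P (P ⊗ C)`. The elements of `P` for which an intertwining
relation holds form a subalgebra, so it suffices to check it on the generators. There it holds
because `v` and `v⁻¹` act on the `c_p` by group-like formulas, while in `n` and `n̄` the two cross
terms cancel.
-/

namespace Entwine

open MulOpposite

section Intertwining

variable {k A B M N : Type*} [CommSemiring k] [Semiring A] [Algebra k A]
  [Semiring B] [Algebra k B]
  [AddCommMonoid M] [Module k M] [Module B M] [IsScalarTower k B M]
  [AddCommMonoid N] [Module k N] [Module B N] [IsScalarTower k B N]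

lemma comp_eq_comp_of_adjoin_eq_top {S : Set A} (hS : Algebra.adjoin k S = ⊤)
    {ρ : A →ₐ[k] Module.End B M} {σ : A →ₐ[k] Module.End B N} {f : M →ₗ[B] N}
    (hf : ∀ a ∈ S, f ∘ₗ ρ a = σ a ∘ₗ f) (a : A) : f ∘ₗ ρ a = σ a ∘ₗ f := by
  have ha : a ∈ Algebra.adjoin k S := hS ▸ Algebra.mem_top
  induction ha using Algebra.adjoin_induction with
  | mem a ha => exact hf a ha
  | algebraMap r => ext m; simp [LinearMap.map_smul_of_tower]
  | add a b _ _ ha hb => simp only [map_add, comp_add, add_comp, ha, hb]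
  | mul a b _ _ ha hb =>
    simp only [map_mul, Module.End.mul_eq_comp, ← comp_assoc, ha]
    simp only [comp_assoc, hb]

lemma adjoin_unop_preimage_eq_top {S : Set A} (hS : Algebra.adjoin k S = ⊤) :
    Algebra.adjoin k (unop ⁻¹' S) = ⊤ := by
  rw [← Subalgebra.op_adjoin, hS, Subalgebra.op_top]

end Intertwining

/-- A right action of `P` on the free left `P`-module `P ⊗ V` by `P`-linear maps. As `P ⊗ V` is
generated by the elements `1 ⊗ v`, this is the same as a map `ψ : V ⊗ P → P ⊗ V` compatible with
the algebra structure of `P`, namely `ψ(v ⊗ x) = (1 ⊗ v) · x`. -/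
abbrev RightAction (k P V : Type*) [CommSemiring k] [Semiring P] [Algebra k P]
    [AddCommMonoid V] [Module k V] : Type _ :=
  Pᵐᵒᵖ →ₐ[k] Module.End P (P ⊗[k] V)

namespace RightAction

section Module

variable {k P V W : Type*} [CommSemiring k] [Semiring P] [Algebra k P]
  [AddCommMonoid V] [Module k V] [AddCommMonoid W] [Module k W]

/-- The map `ψ : v ⊗ x ↦ (1 ⊗ v) · x` determined by a right action on `P ⊗ V`. -/
def twist (ρ : RightAction k P V) : V ⊗[k] P →ₗ[k] P ⊗[k] V :=
  TensorProduct.lift <| LinearMap.mk₂ k (fun v x => ρ (op x) (1 ⊗ₜ v))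
    (fun v w x => by rw [tmul_add, map_add])
    (fun r v x => by rw [tmul_smul, LinearMap.map_smul_of_tower])
    (fun v x y => by rw [op_add, map_add, LinearMap.add_apply])
    (fun r v x => by rw [op_smul, map_smul, LinearMap.smul_apply])

@[simp] lemma twist_tmul (ρ : RightAction k P V) (v : V) (x : P) :
    ρ.twist (v ⊗ₜ x) = ρ (op x) (1 ⊗ₜ v) := rfl

lemma apply_tmul (ρ : RightAction k P V) (x : Pᵐᵒᵖ) (u : P) (v : V) :
    ρ x (u ⊗ₜ v) = u • ρ x (1 ⊗ₜ v) := by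
  rw [← map_smul, smul_tmul', smul_eq_mul, mul_one]

lemma smul_eq_map_mul (u : P) (z : P ⊗[k] V) :
    u • z = TensorProduct.map (LinearMap.mul' k P) LinearMap.id
      ((TensorProduct.assoc k P P V).symm (u ⊗ₜ z)) := by
  induction z with
  | zero => simp
  | add z z' hz hz' => simp only [smul_add, tmul_add, map_add, hz, hz']
  | tmul u' v => simp [smul_tmul']

variable (W) in
/-- The `P`-balanced pairing `m, u ⊗ w ↦ m · u ⊗ w`, which identifies
`(P ⊗ V) ⊗_P (P ⊗ W)` with `(P ⊗ V) ⊗ W`. -/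
def pairing (ρ : RightAction k P V) :
    P ⊗[k] V →ₗ[P] P ⊗[k] W →ₗ[k] (P ⊗[k] V) ⊗[k] W where
  toFun m := TensorProduct.map
    { toFun := fun u => ρ (op u) m
      map_add' := fun u u' => by rw [op_add, map_add, LinearMap.add_apply]
      map_smul' := fun r u => by rw [op_smul, map_smul, LinearMap.smul_apply, RingHom.id_apply] }
    LinearMap.id
  map_add' m m' := by ext; simp [add_tmul]
  map_smul' u m := by ext; simp [smul_tmul']

@[simp] lemma pairing_tmul (ρ : RightAction k P V) (m : P ⊗[k] V) (u : P) (w : W) :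
    ρ.pairing W m (u ⊗ₜ w) = ρ (op u) m ⊗ₜ w := rfl

lemma pairing_smul (ρ : RightAction k P V) (m : P ⊗[k] V) (u : P) (z : P ⊗[k] W) :
    ρ.pairing W m (u • z) = ρ.pairing W (ρ (op u) m) z := by
  induction z with
  | zero => simp
  | add z z' hz hz' => simp only [smul_add, map_add, hz, hz']
  | tmul u' w => simp [smul_tmul']

lemma pairing_one_tmul (ρ : RightAction k P V) (v : V) (z : P ⊗[k] W) :
    ρ.pairing W (1 ⊗ₜ v) z =
      TensorProduct.map ρ.twist LinearMap.id ((TensorProduct.assoc k V P W).symm (v ⊗ₜ z)) := by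
  induction z with
  | zero => simp
  | add z z' hz hz' => simp only [tmul_add, map_add, hz, hz']
  | tmul u w => simp

/-- The endomorphism `m ⊗ w ↦ ⟨m, (1 ⊗ w) · x⟩` of `(P ⊗ V) ⊗ W`. -/
def tensorEnd (ρ : RightAction k P V) (σ : RightAction k P W) (x : Pᵐᵒᵖ) :
    Module.End P ((P ⊗[k] V) ⊗[k] W) :=
  AlgebraTensorModule.lift <|
    (ρ.pairing W).compl₂ ((σ x).restrictScalars k ∘ₗ TensorProduct.mk k P W 1)

@[simp] lemma tensorEnd_tmul (ρ : RightAction k P V) (σ : RightAction k P W) (x : Pᵐᵒᵖ)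
    (m : P ⊗[k] V) (w : W) :
    tensorEnd ρ σ x (m ⊗ₜ w) = ρ.pairing W m (σ x (1 ⊗ₜ w)) := by
  simp [tensorEnd]

lemma tensorEnd_pairing (ρ : RightAction k P V) (σ : RightAction k P W) (x : Pᵐᵒᵖ)
    (m : P ⊗[k] V) (z : P ⊗[k] W) :
    tensorEnd ρ σ x (ρ.pairing W m z) = ρ.pairing W m (σ x z) := by
  induction z with
  | zero => simp
  | add z z' hz hz' => simp only [map_add, hz, hz']
  | tmul u w => rw [pairing_tmul, tensorEnd_tmul, apply_tmul σ x u w, pairing_smul]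

/-- The right action on `(P ⊗ V) ⊗ W` obtained from its identification with the tensor product
`(P ⊗ V) ⊗_P (P ⊗ W)` of `P`-bimodules. -/
def tensor (ρ : RightAction k P V) (σ : RightAction k P W) :
    Pᵐᵒᵖ →ₐ[k] Module.End P ((P ⊗[k] V) ⊗[k] W) :=
  AlgHom.ofLinearMap
    { toFun := tensorEnd ρ σ
      map_add' := fun x y => AlgebraTensorModule.ext fun m w => by simp
      map_smul' := fun r x => AlgebraTensorModule.ext fun m w => by simp }
    (AlgebraTensorModule.ext fun m w => by simp)
    (fun x y => AlgebraTensorModule.ext fun m w => by simp [tensorEnd_pairing])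

@[simp] lemma tensor_tmul (ρ : RightAction k P V) (σ : RightAction k P W) (x : Pᵐᵒᵖ)
    (m : P ⊗[k] V) (w : W) :
    tensor ρ σ x (m ⊗ₜ w) = ρ.pairing W m (σ x (1 ⊗ₜ w)) :=
  tensorEnd_tmul ρ σ x m w

end Module

section Coalgebra

variable (k P C : Type*) [CommSemiring k] [Semiring P] [Algebra k P]
  [AddCommMonoid C] [Module k C] [Coalgebra k C]

/-- The map `id ⊗ Δ`, bracketed as `P ⊗ C → (P ⊗ C) ⊗ C`. -/
def comulRight : P ⊗[k] C →ₗ[P] (P ⊗[k] C) ⊗[k] C :=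
  (AlgebraTensorModule.assoc k k P P C C).symm.toLinearMap ∘ₗ
    (Coalgebra.comul (R := k) (A := C)).baseChange P

variable {C} in
lemma comulRight_apply (z : P ⊗[k] C) :
    comulRight k P C z = (TensorProduct.assoc k P C C).symm
      (TensorProduct.map LinearMap.id Coalgebra.comul z) := rfl

/-- The map `id ⊗ ε : P ⊗ C → P`. -/
def counitRight : P ⊗[k] C →ₗ[P] P :=
  (AlgebraTensorModule.rid k P P).toLinearMap ∘ₗ
    (Coalgebra.counit (R := k) (A := C)).baseChange P

variable {C} in
lemma counitRight_apply (z : P ⊗[k] C) :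
    counitRight k P C z =
      TensorProduct.rid k P (TensorProduct.map LinearMap.id Coalgebra.counit z) := rfl

end Coalgebra

section Entwining

variable {k P C : Type} [Field k] [Ring P] [Algebra k P]
  [AddCommGroup C] [Module k C]

lemma axMul_twist (ρ : RightAction k P C) : AxMul k P C ρ.twist := by
  have apply_eq (y : P) (z : P ⊗[k] C) : ρ (op y) z =
      TensorProduct.map (μ k P) LinearMap.id ((TensorProduct.assoc k P P C).symm
        (TensorProduct.map LinearMap.id ρ.twist (TensorProduct.assoc k P C P (z ⊗ₜ y)))) := by
    induction z with
    | zero => simp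
    | add z z' hz hz' => simp only [map_add, add_tmul, hz, hz']
    | tmul u c => rw [apply_tmul, smul_eq_map_mul]; simp
  refine TensorProduct.ext <| LinearMap.ext fun c => TensorProduct.ext <|
    LinearMap.ext₂ fun x y => ?_
  simpa using apply_eq y (ρ (op x) (1 ⊗ₜ c))

lemma axOne_twist (ρ : RightAction k P C) : AxOne k P C ρ.twist := fun c => by simp

variable [Coalgebra k C]

lemma axComul_twist {ρ : RightAction k P C}
    (h : ∀ x, comulRight k P C ∘ₗ ρ x = tensor ρ ρ x ∘ₗ comulRight k P C) :
    AxComul k P C ρ.twist := by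
  have tensor_assoc_symm (x : P) (t : C ⊗[k] C) :
      tensor ρ ρ (op x) ((TensorProduct.assoc k P C C).symm (1 ⊗ₜ t)) =
        TensorProduct.map ρ.twist LinearMap.id ((TensorProduct.assoc k C P C).symm
          (TensorProduct.map LinearMap.id ρ.twist (TensorProduct.assoc k C C P (t ⊗ₜ x)))) := by
    induction t with
    | zero => simp
    | add t t' ht ht' => simp only [tmul_add, add_tmul, map_add, ht, ht']
    | tmul c d => simp [pairing_one_tmul]
  refine TensorProduct.ext' fun c x => (TensorProduct.assoc k P C C).symm.injective ?_
  have hx := LinearMap.congr_fun (h (op x)) (1 ⊗ₜ c)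
  simpa [comulRight_apply, tensor_assoc_symm] using hx

lemma axCounit_twist {ρ : RightAction k P C}
    (h : ∀ x, counitRight k P C ∘ₗ ρ x = AlgEquiv.moduleEndSelf k x ∘ₗ counitRight k P C) :
    AxCounit k P C ρ.twist := by
  refine TensorProduct.ext' fun c x => ?_
  have hx := LinearMap.congr_fun (h (op x)) (1 ⊗ₜ c)
  simpa [counitRight_apply] using hx

theorem isEntwining_twist {S : Set P} (hS : Algebra.adjoin k S = ⊤) (ρ : RightAction k P C)
    (hΔ : ∀ x ∈ S, comulRight k P C ∘ₗ ρ (op x) = tensor ρ ρ (op x) ∘ₗ comulRight k P C)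
    (hε : ∀ x ∈ S, counitRight k P C ∘ₗ ρ (op x) =
      AlgEquiv.moduleEndSelf k (op x) ∘ₗ counitRight k P C) :
    IsEntwining k P C ρ.twist :=
  have hS' := adjoin_unop_preimage_eq_top hS
  ⟨axMul_twist ρ, axOne_twist ρ,
    axComul_twist <| comp_eq_comp_of_adjoin_eq_top hS' fun x => hΔ x.unop,
    axCounit_twist <| comp_eq_comp_of_adjoin_eq_top (σ := (AlgEquiv.moduleEndSelf k).toAlgHom) hS'
      fun x => hε x.unop⟩

end Entwining

end RightAction

end Entwine

namespace Eq2Ex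

open MulOpposite

section Presentation

variable {k : Type} [Field k] {q : kˣ}

/-- The defining relations of `E_q(2)`, for elements `v`, `vi`, `n`, `nb` of any algebra in the
roles of `v`, `v⁻¹`, `n`, `n̄`. -/
structure Eq2.Relations (q : kˣ) {A : Type*} [Semiring A] [Algebra k A] (v vi n nb : A) : Prop where
  v_mul_n : v * n = (q : k) ^ 2 • (n * v)
  v_mul_nb : v * nb = (q : k) ^ 2 • (nb * v)
  n_mul_nb : n * nb = (q : k) ^ 2 • (nb * n)
  v_mul_vi : v * vi = 1
  vi_mul_v : vi * v = 1

namespace Eq2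

lemma relations_generators : Relations q (vE k q) (viE k q) (nE k q) (nbE k q) where
  v_mul_n := by simpa [vE, nE] using RingQuot.mkAlgHom_rel k (EqRel.vn (k := k) (q := q))
  v_mul_nb := by simpa [vE, nbE] using RingQuot.mkAlgHom_rel k (EqRel.vnb (k := k) (q := q))
  n_mul_nb := by simpa [nE, nbE] using RingQuot.mkAlgHom_rel k (EqRel.nnb (k := k) (q := q))
  v_mul_vi := by simpa [vE, viE] using RingQuot.mkAlgHom_rel k (EqRel.vvi (k := k) (q := q))
  vi_mul_v := by simpa [vE, viE] using RingQuot.mkAlgHom_rel k (EqRel.viv (k := k) (q := q))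

lemma adjoin_generators : Algebra.adjoin k {vE k q, viE k q, nE k q, nbE k q} = ⊤ := by
  have hrange : RingQuot.mkAlgHom k (EqRel k q) '' Set.range (FreeAlgebra.ι k) =
      {vE k q, viE k q, nE k q, nbE k q} := by
    ext x
    simp [Fin.exists_fin_succ, vE, viE, nE, nbE, eq_comm]
  rw [← hrange, ← AlgHom.map_adjoin, FreeAlgebra.adjoin_range_ι, Algebra.map_top,
    (AlgHom.range_eq_top _).2 (RingQuot.mkAlgHom_surjective k _)]

variable {A : Type*} [Semiring A] [Algebra k A] {v vi n nb : A}

namespace Relations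

lemma n_mul_vi (h : Relations q v vi n nb) : n * vi = (q : k) ^ 2 • (vi * n) :=
  calc n * vi = vi * (v * n) * vi := by rw [← mul_assoc, h.vi_mul_v, one_mul]
    _ = (q : k) ^ 2 • (vi * n * (v * vi)) := by
      rw [h.v_mul_n, mul_smul_comm, smul_mul_assoc]; simp only [mul_assoc]
    _ = (q : k) ^ 2 • (vi * n) := by rw [h.v_mul_vi, mul_one]

/-- The algebra map out of `E_q(2)` given by a solution of its defining relations. -/
def lift (h : Relations q v vi n nb) : Eq2 k q →ₐ[k] A :=
  RingQuot.liftAlgHom k ⟨FreeAlgebra.lift k ![v, vi, n, nb], by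
    rintro _ _ (_ | _ | _ | _ | _)
    exacts [by simpa using h.v_mul_n, by simpa using h.v_mul_nb, by simpa using h.n_mul_nb,
      by simpa using h.v_mul_vi, by simpa using h.vi_mul_v]⟩

@[simp] lemma lift_vE (h : Relations q v vi n nb) : h.lift (vE k q) = v := by simp [lift, vE]

@[simp] lemma lift_viE (h : Relations q v vi n nb) : h.lift (viE k q) = vi := by simp [lift, viE]

@[simp] lemma lift_nE (h : Relations q v vi n nb) : h.lift (nE k q) = n := by simp [lift, nE]

@[simp] lemma lift_nbE (h : Relations q v vi n nb) : h.lift (nbE k q) = nb := by simp [lift, nbE]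

end Relations

end Eq2

end Presentation

section BaseChange

variable {k : Type} [Field k] {P M : Type*} [Semiring P] [Algebra k P]
  [AddCommMonoid M] [Module P M]

variable (k P) in
/-- The basis `1 ⊗ c_p` of the left `P`-module `P ⊗ C`. -/
def czBasis : Module.Basis ℤ P (P ⊗[k] Cz k) :=
  Algebra.TensorProduct.basis P Finsupp.basisSingleOne

@[simp] lemma czBasis_apply (p : ℤ) : czBasis k P p = 1 ⊗ₜ cz k p := by
  simp [czBasis, cz]

lemma hom_ext_cz {f g : P ⊗[k] Cz k →ₗ[P] M} (h : ∀ p, f (1 ⊗ₜ cz k p) = g (1 ⊗ₜ cz k p)) :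
    f = g :=
  (czBasis k P).ext fun p => by simpa using h p

/-- The `P`-linear map with `u ⊗ c_p ↦ u • g p`. -/
def constrCz (g : ℤ → M) : P ⊗[k] Cz k →ₗ[P] M := (czBasis k P).constr ℕ g

@[simp] lemma constrCz_tmul (g : ℤ → M) (u : P) (p : ℤ) :
    constrCz g (u ⊗ₜ cz k p) = u • g p := by
  have h := (czBasis k P).constr_basis ℕ g p
  rw [czBasis_apply] at h
  rw [← h, constrCz, ← map_smul, smul_tmul', smul_eq_mul, mul_one]

@[simp] lemma comul_cz (p : ℤ) : Coalgebra.comul (R := k) (cz k p) = cz k p ⊗ₜ cz k p := by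
  simp [cz]

@[simp] lemma counit_cz (p : ℤ) : Coalgebra.counit (R := k) (cz k p) = 1 := by
  simp [cz]

open Entwine RightAction

@[simp] lemma comulRight_tmul_cz (u : P) (p : ℤ) :
    comulRight k P (Cz k) (u ⊗ₜ cz k p) = (u ⊗ₜ cz k p) ⊗ₜ cz k p := by
  simp [comulRight_apply]

@[simp] lemma counitRight_tmul_cz (u : P) (p : ℤ) :
    counitRight k P (Cz k) (u ⊗ₜ cz k p) = u := by
  simp [counitRight_apply]

lemma comulRight_comp_of_groupLike {ρ : RightAction k P (Cz k)} {x : P} {f : ℤ → ℤ}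
    (hx : ∀ p, ρ (op x) (1 ⊗ₜ cz k p) = x ⊗ₜ cz k (f p)) :
    comulRight k P (Cz k) ∘ₗ ρ (op x) = tensor ρ ρ (op x) ∘ₗ comulRight k P (Cz k) :=
  hom_ext_cz fun p => by simp [hx]

end BaseChange

section SkewPrimitive

variable {k : Type} [Field k] {P : Type*} [Ring P] [Algebra k P]

open Entwine RightAction

lemma comulRight_comp_of_skewPrimitive {ρ : RightAction k P (Cz k)} {x g : P} {f : ℤ → ℤ}
    {w : ℤ → k} (hg : ∀ p, ρ (op g) (1 ⊗ₜ cz k p) = g ⊗ₜ cz k (f p))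
    (hx : ∀ p, ρ (op x) (1 ⊗ₜ cz k p) =
      x ⊗ₜ cz k p + w p • (g ⊗ₜ cz k p) - w p • (g ⊗ₜ cz k (f p))) :
    comulRight k P (Cz k) ∘ₗ ρ (op x) = tensor ρ ρ (op x) ∘ₗ comulRight k P (Cz k) :=
  hom_ext_cz fun p => by
    simp [hx, hg, LinearMap.map_smul_of_tower, add_tmul, sub_tmul, ← smul_tmul']

end SkewPrimitive

section EntwiningMap

variable {k : Type} [Field k] (q κ μv νv : kˣ)

/-- The coefficient `κ q^{2p}`, with `κ = μ` or `ν`, in the formulas for `ψ(c_p ⊗ n)` and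
`ψ(c_p ⊗ n̄)`. -/
def weight (p : ℤ) : k := (κ : k) * ((q ^ (2 * p) : kˣ) : k)

lemma weight_add_one (p : ℤ) : weight q κ (p + 1) = (q : k) ^ 2 * weight q κ p := by
  rw [weight, weight, mul_add, mul_one, zpow_add, zpow_ofNat]
  push_cast
  ring

lemma weight_eq_sub_one (p : ℤ) : weight q κ p = (q : k) ^ 2 * weight q κ (p - 1) := by
  rw [← weight_add_one, sub_add_cancel]

/-- The endomorphism `u ⊗ c_p ↦ u ψ(c_p ⊗ v)`. -/
def actV : Module.End (Eq2 k q) (Eq2 k q ⊗[k] Cz k) :=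
  constrCz fun p => vE k q ⊗ₜ cz k (p + 1)

/-- The endomorphism `u ⊗ c_p ↦ u ψ(c_p ⊗ v⁻¹)`. -/
def actVInv : Module.End (Eq2 k q) (Eq2 k q ⊗[k] Cz k) :=
  constrCz fun p => viE k q ⊗ₜ cz k (p - 1)

/-- The endomorphism `u ⊗ c_p ↦ u ψ(c_p ⊗ n)`. -/
def actN : Module.End (Eq2 k q) (Eq2 k q ⊗[k] Cz k) :=
  constrCz fun p => nE k q ⊗ₜ cz k p
    + weight q μv p • (vE k q ⊗ₜ cz k p) - weight q μv p • (vE k q ⊗ₜ cz k (p + 1))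

/-- The endomorphism `u ⊗ c_p ↦ u ψ(c_p ⊗ n̄)`. -/
def actNBar : Module.End (Eq2 k q) (Eq2 k q ⊗[k] Cz k) :=
  constrCz fun p => nbE k q ⊗ₜ cz k p
    + weight q νv p • (viE k q ⊗ₜ cz k p) - weight q νv p • (viE k q ⊗ₜ cz k (p - 1))

@[simp] lemma actV_tmul (u : Eq2 k q) (p : ℤ) :
    actV q (u ⊗ₜ cz k p) = (u * vE k q) ⊗ₜ cz k (p + 1) := by
  simp [actV, smul_tmul']

@[simp] lemma actVInv_tmul (u : Eq2 k q) (p : ℤ) :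
    actVInv q (u ⊗ₜ cz k p) = (u * viE k q) ⊗ₜ cz k (p - 1) := by
  simp [actVInv, smul_tmul']

@[simp] lemma actN_tmul (u : Eq2 k q) (p : ℤ) :
    actN q μv (u ⊗ₜ cz k p) = (u * nE k q) ⊗ₜ cz k p
      + weight q μv p • ((u * vE k q) ⊗ₜ cz k p)
      - weight q μv p • ((u * vE k q) ⊗ₜ cz k (p + 1)) := by
  simp [actN, smul_add, smul_sub, smul_tmul']

@[simp] lemma actNBar_tmul (u : Eq2 k q) (p : ℤ) :
    actNBar q νv (u ⊗ₜ cz k p) = (u * nbE k q) ⊗ₜ cz k p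
      + weight q νv p • ((u * viE k q) ⊗ₜ cz k p)
      - weight q νv p • ((u * viE k q) ⊗ₜ cz k (p - 1)) := by
  simp [actNBar, smul_add, smul_sub, smul_tmul']

open Eq2 (relations_generators)

lemma actN_mul_actV : actN q μv * actV q = (q : k) ^ 2 • (actV q * actN q μv) := by
  refine hom_ext_cz fun p => ?_
  simp only [Module.End.mul_apply, LinearMap.smul_apply, map_sub, map_add, map_smul_of_tower,
    actV_tmul, actN_tmul, one_mul, relations_generators.v_mul_n, ← smul_tmul', weight_add_one]
  module

lemma actNBar_mul_actV : actNBar q νv * actV q = (q : k) ^ 2 • (actV q * actNBar q νv) := by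
  refine hom_ext_cz fun p => ?_
  simp only [Module.End.mul_apply, LinearMap.smul_apply, map_sub, map_add, map_smul_of_tower,
    actV_tmul, actNBar_tmul, one_mul, relations_generators.v_mul_nb, relations_generators.v_mul_vi,
    relations_generators.vi_mul_v, ← smul_tmul', weight_add_one, add_sub_cancel_right,
    sub_add_cancel]
  module

lemma actNBar_mul_actN :
    actNBar q νv * actN q μv = (q : k) ^ 2 • (actN q μv * actNBar q νv) := by
  refine hom_ext_cz fun p => ?_
  simp only [Module.End.mul_apply, LinearMap.smul_apply, map_sub, map_add, map_smul_of_tower,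
    actN_tmul, actNBar_tmul, one_mul, relations_generators.v_mul_nb,
    relations_generators.n_mul_nb, relations_generators.n_mul_vi, relations_generators.v_mul_vi,
    relations_generators.vi_mul_v, ← smul_tmul', weight_add_one, weight_eq_sub_one q μv p,
    add_sub_cancel_right, sub_add_cancel]
  module

lemma actVInv_mul_actV : actVInv q * actV q = 1 :=
  hom_ext_cz fun p => by simp [relations_generators.v_mul_vi]

lemma actV_mul_actVInv : actV q * actVInv q = 1 :=
  hom_ext_cz fun p => by simp [relations_generators.vi_mul_v]

lemma relations_op_act :
    Eq2.Relations q (op (actV q)) (op (actVInv q)) (op (actN q μv)) (op (actNBar q νv)) where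
  v_mul_n := by rw [← op_mul, ← op_mul, ← op_smul, actN_mul_actV]
  v_mul_nb := by rw [← op_mul, ← op_mul, ← op_smul, actNBar_mul_actV]
  n_mul_nb := by rw [← op_mul, ← op_mul, ← op_smul, actNBar_mul_actN]
  v_mul_vi := by rw [← op_mul, actVInv_mul_actV, op_one]
  vi_mul_v := by rw [← op_mul, actV_mul_actVInv, op_one]

/-- The right action of `E_q(2)` on `E_q(2) ⊗ C` that corresponds to `ψ`. -/
def act : Entwine.RightAction k (Eq2 k q) (Cz k) :=
  AlgHom.opComm (relations_op_act q μv νv).lift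

@[simp] lemma act_vE : act q μv νv (op (vE k q)) = actV q := by simp [act]

@[simp] lemma act_viE : act q μv νv (op (viE k q)) = actVInv q := by simp [act]

@[simp] lemma act_nE : act q μv νv (op (nE k q)) = actN q μv := by simp [act]

@[simp] lemma act_nbE : act q μv νv (op (nbE k q)) = actNBar q νv := by simp [act]

open Entwine RightAction

lemma psiOnGens_twist_act : PsiOnGens k q μv νv (act q μv νv).twist := by
  refine ⟨?_, ?_, ?_, ?_⟩ <;> intro p <;> simp [weight]

lemma comulRight_comp_act {x : Eq2 k q} (hx : x ∈ ({vE k q, viE k q, nE k q, nbE k q} : Set _)) :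
    comulRight k (Eq2 k q) (Cz k) ∘ₗ act q μv νv (op x) =
      tensor (act q μv νv) (act q μv νv) (op x) ∘ₗ comulRight k (Eq2 k q) (Cz k) := by
  have hv (p : ℤ) : act q μv νv (op (vE k q)) (1 ⊗ₜ cz k p) = vE k q ⊗ₜ cz k (p + 1) := by simp
  have hvi (p : ℤ) : act q μv νv (op (viE k q)) (1 ⊗ₜ cz k p) = viE k q ⊗ₜ cz k (p - 1) := by
    simp
  rcases hx with rfl | rfl | rfl | rfl
  · exact comulRight_comp_of_groupLike hv
  · exact comulRight_comp_of_groupLike hvi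
  · exact comulRight_comp_of_skewPrimitive (w := weight q μv) hv fun p => by simp
  · exact comulRight_comp_of_skewPrimitive (w := weight q νv) hvi fun p => by simp

lemma counitRight_comp_act {x : Eq2 k q} (hx : x ∈ ({vE k q, viE k q, nE k q, nbE k q} : Set _)) :
    counitRight k (Eq2 k q) (Cz k) ∘ₗ act q μv νv (op x) =
      AlgEquiv.moduleEndSelf k (op x) ∘ₗ counitRight k (Eq2 k q) (Cz k) := by
  refine hom_ext_cz fun p => ?_
  rcases hx with rfl | rfl | rfl | rfl <;> simp [LinearMap.map_smul_of_tower]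

end EntwiningMap

/-- The map `ψ` defined on the generators of `E_q(2)` by the formulas
of the `E_q(2)` example is well defined (it respects the defining relations) and
satisfies the entwining axioms: i.e. there exists a linear map
`ψ : C ⊗ E_q(2) → E_q(2) ⊗ C` taking the prescribed values on generators which is an
entwining map. -/
theorem eq2_entwining (k : Type) [Field k] (q μv νv : kˣ) :
    ∃ ψ : Cz k ⊗[k] Eq2 k q →ₗ[k] Eq2 k q ⊗[k] Cz k,
      PsiOnGens k q μv νv ψ ∧ Entwine.IsEntwining k (Eq2 k q) (Cz k) ψ :=
  ⟨(act q μv νv).twist, psiOnGens_twist_act q μv νv,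
    Entwine.RightAction.isEntwining_twist Eq2.adjoin_generators (act q μv νv)
      (fun _ => comulRight_comp_act q μv νv) (fun _ => counitRight_comp_act q μv νv)⟩

end Eq2Ex
end
end
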